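/- arXiv:1105.1084 — 2 statements merged into one kernel-verified Lean document; each statement's English description precedes it below -/
import Mathlib

section
/- Let n ≥ 1 and let 𝔏(ℝⁿ) denote the convex set of all POVMs M on (ℝⁿ, ℬ(ℝⁿ)) acting on L²(ℝⁿ) that are covariant under position translations (U(q)M(B)U(q)* = M(B+q)) and invariant under momentum boosts (V(p)M(B)V(p)* = M(B)). Then M ∈ 𝔏(ℝⁿ) is an extreme point of 𝔏(ℝⁿ) if and only if there exists q ∈ ℝⁿ such that M(B) is multiplication by the indicator function χ_{B−q} for every Borel B ⊆ ℝⁿ, i.e. M is a translated canonical position observable M_q(B) = M_κ(B − q). In particular, all extreme points of 𝔏(ℝⁿ) are projection valued measures. -/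
open scoped Classical

open MeasureTheory Set
open scoped ComplexConjugate

local notation "⟪" x ", " y "⟫" => @inner ℂ _ _ x y

/-- A normalized positive operator valued measure (POVM). -/
structure POVM (Ω : Type*) [MeasurableSpace Ω] (H : Type*) [NormedAddCommGroup H]
    [InnerProductSpace ℂ H] [CompleteSpace H] where
  toFun : Set Ω → (H →L[ℂ] H)
  isPositive : ∀ B : Set Ω, MeasurableSet B → (toFun B).IsPositive
  normalized : toFun Set.univ = 1
  m_iUnion : ∀ B : ℕ → Set Ω, (∀ k, MeasurableSet (B k)) →
    Pairwise (Function.onFun Disjoint B) → ∀ φ ψ : H,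
      HasSum (fun k => ⟪φ, toFun (B k) ψ⟫) ⟪φ, toFun (⋃ k, B k) ψ⟫

/-- `L²(ℝⁿ)`. -/
noncomputable abbrev L2Rn (n : ℕ) : Type := Lp ℂ 2 (volume : Measure (Fin n → ℝ))

/-- Covariance under position translations: `U(q) M(B) U(q)* = M(B + q)`. -/
def TransCovariant (n : ℕ) (U : (Fin n → ℝ) → (L2Rn n ≃ₗᵢ[ℂ] L2Rn n))
    (M : POVM (Fin n → ℝ) (L2Rn n)) : Prop :=
  ∀ q : Fin n → ℝ, ∀ B : Set (Fin n → ℝ), MeasurableSet B →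
    ∀ φ ψ : L2Rn n,
      ⟪(U q φ : L2Rn n), M.toFun ((fun x => x + q) '' B) (U q ψ)⟫ = ⟪φ, M.toFun B ψ⟫

/-- Invariance under momentum boosts: `V(p) M(B) V(p)* = M(B)`. -/
def BoostInvariant (n : ℕ) (V : (Fin n → ℝ) → (L2Rn n ≃ₗᵢ[ℂ] L2Rn n))
    (M : POVM (Fin n → ℝ) (L2Rn n)) : Prop :=
  ∀ p : Fin n → ℝ, ∀ B : Set (Fin n → ℝ), MeasurableSet B →
    ∀ φ ψ : L2Rn n,
      ⟪(V p φ : L2Rn n), M.toFun B (V p ψ)⟫ = ⟪φ, M.toFun B ψ⟫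


/-- `M` is an extreme point of the convex set `𝔏(ℝⁿ)` of translation-covariant,
boost-invariant POVMs. -/
def IsExtremeInL (n : ℕ)
    (U V : (Fin n → ℝ) → (L2Rn n ≃ₗᵢ[ℂ] L2Rn n))
    (M : POVM (Fin n → ℝ) (L2Rn n)) : Prop :=
  ∀ M₁ M₂ : POVM (Fin n → ℝ) (L2Rn n),
    TransCovariant n U M₁ → BoostInvariant n V M₁ →
    TransCovariant n U M₂ → BoostInvariant n V M₂ →
    ∀ t : ℝ, 0 < t → t < 1 →
    (∀ B : Set (Fin n → ℝ), MeasurableSet B →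
      M.toFun B = (t : ℂ) • M₁.toFun B + ((1 - t : ℝ) : ℂ) • M₂.toFun B) →
    ∀ B : Set (Fin n → ℝ), MeasurableSet B →
      M₁.toFun B = M.toFun B ∧ M₂.toFun B = M.toFun B

/-!
Boost invariance makes each `M(B)` commute with all `e^{iℓ(x)}`, hence, by injectivity of the
Fourier transform on finite measures, act as multiplication by a function `f_B`. Translation
covariance then gives `|φ|² ∗ m_ψ = |ψ|² ∗ m_φ`, where `m_φ(B) = ⟨φ, M(B) φ⟩`: the value of either
side at `B` is the integral of `f_B` against `|φ|² ∗ |ψ|²`. As `φ` runs through unit vectors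
concentrating at the origin, the measures `m_φ` are tight, and a weak limit point `ρ` satisfies
`m_ψ = |ψ|² ∗ ρ` for every `ψ`. So `M` is the position observable smeared by a unique probability
measure `ρ`, which depends affinely on `M`, and a probability measure without nontrivial convex
decompositions is a Dirac measure. Conversely, a projection valued measure is extreme in any class
of POVMs: if `P` is a projection with `tA ≤ P` and `t(1 - A) ≤ 1 - P`, where `0 ≤ A ≤ 1` and
`0 < t`, then `A = AP` and `(1 - A)P = 0`, so `A = P`.
-/

open Filter Topology ProbabilityTheory
open scoped ENNReal

section Operator

variable {H : Type*} [NormedAddCommGroup H] [InnerProductSpace ℂ H]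

lemma eq_of_re_inner_eq {A B : H →L[ℂ] H} (hA : A.IsPositive) (hB : B.IsPositive)
    (h : ∀ φ, (⟪φ, A φ⟫).re = (⟪φ, B φ⟫).re) : A = B := by
  refine ContinuousLinearMap.coe_injective ((ext_inner_map _ _).1 fun φ => ?_)
  have hAφ := ((ContinuousLinearMap.isPositive_iff_complex A).1 hA φ).1
  have hBφ := ((ContinuousLinearMap.isPositive_iff_complex B).1 hB φ).1
  simp only [ContinuousLinearMap.coe_coe]
  rw [← hAφ, ← hBφ, hA.inner_left_eq_inner_right, hB.inner_left_eq_inner_right]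
  exact congrArg _ (h φ)

lemma eq_of_isStarProjection_of_smul_le [CompleteSpace H] {P A : H →L[ℂ] H}
    (hP : IsStarProjection P) (hA₀ : 0 ≤ A) (hA₁ : A ≤ 1) {t : ℝ} (ht : 0 < t)
    (hA : t • A ≤ P) (hA' : t • (1 - A) ≤ 1 - P) : A = P := by
  have hAP : A * P = A := by
    have h := (hP.mul_right_and_mul_left_of_nonneg_of_le (smul_nonneg ht.le hA₀) hA).1
    rw [smul_mul_assoc] at h
    exact smul_right_injective _ ht.ne' h
  have hAP' : (1 - A) * (1 - P) = 1 - A := by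
    have h := (hP.one_sub.mul_right_and_mul_left_of_nonneg_of_le
      (smul_nonneg ht.le (sub_nonneg.2 hA₁)) hA').1
    rw [smul_mul_assoc] at h
    exact smul_right_injective _ ht.ne' h
  calc A = A * P := hAP.symm
    _ = P := by
      rw [mul_sub, mul_one, sub_eq_self, sub_mul, one_mul, sub_eq_zero] at hAP'
      exact hAP'.symm

end Operator

namespace POVM

section Basic

variable {Ω : Type*} [MeasurableSpace Ω] {H : Type*} [NormedAddCommGroup H]
  [InnerProductSpace ℂ H] [CompleteSpace H] (M : POVM Ω H)

lemma toFun_empty : M.toFun ∅ = 0 := by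
  ext ψ
  refine ext_inner_left ℂ fun φ => ?_
  have h := M.m_iUnion (fun _ => ∅) (fun _ => MeasurableSet.empty)
    (fun _ _ _ => disjoint_bot_left) φ ψ
  simpa using (summable_const_iff _).1 h.summable

/-- The distribution `B ↦ ⟨φ, M(B) φ⟩` of the outcomes of `M` in the (unnormalized) state `φ`. -/
noncomputable def scalarMeasure (φ : H) : Measure Ω :=
  Measure.ofMeasurable (fun B _ => ENNReal.ofReal (⟪φ, M.toFun B φ⟫).re)
    (by simp [toFun_empty]) fun B hB hd => by
      have h := Complex.hasSum_re (M.m_iUnion B hB hd φ φ)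
      rw [← h.tsum_eq]
      exact ENNReal.ofReal_tsum_of_nonneg
        (fun k => (M.isPositive (B k) (hB k)).re_inner_nonneg_right φ) h.summable

lemma scalarMeasure_apply (φ : H) {B : Set Ω} (hB : MeasurableSet B) :
    M.scalarMeasure φ B = ENNReal.ofReal (⟪φ, M.toFun B φ⟫).re :=
  Measure.ofMeasurable_apply B hB

lemma scalarMeasure_real_apply (φ : H) {B : Set Ω} (hB : MeasurableSet B) :
    (M.scalarMeasure φ).real B = (⟪φ, M.toFun B φ⟫).re := by
  rw [Measure.real, scalarMeasure_apply M φ hB]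
  exact ENNReal.toReal_ofReal ((M.isPositive B hB).re_inner_nonneg_right φ)

lemma scalarMeasure_real_univ (φ : H) : (M.scalarMeasure φ).real univ = ‖φ‖ ^ 2 := by
  rw [scalarMeasure_real_apply M φ .univ, M.normalized]
  exact inner_self_eq_norm_sq (𝕜 := ℂ) φ

instance isFiniteMeasure_scalarMeasure (φ : H) : IsFiniteMeasure (M.scalarMeasure φ) :=
  ⟨by rw [scalarMeasure_apply M φ .univ]; exact ENNReal.ofReal_lt_top⟩

lemma isProbabilityMeasure_scalarMeasure {φ : H} (hφ : ‖φ‖ = 1) :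
    IsProbabilityMeasure (M.scalarMeasure φ) :=
  isProbabilityMeasure_iff_real.2 (by rw [scalarMeasure_real_univ, hφ, one_pow])

lemma toFun_eq_of_scalarMeasure_eq {M M' : POVM Ω H}
    (h : ∀ φ, M.scalarMeasure φ = M'.scalarMeasure φ) {B : Set Ω} (hB : MeasurableSet B) :
    M.toFun B = M'.toFun B :=
  eq_of_re_inner_eq (M.isPositive B hB) (M'.isPositive B hB) fun φ => by
    rw [← scalarMeasure_real_apply M φ hB, h, scalarMeasure_real_apply M' φ hB]

lemma toFun_add_toFun_compl {B : Set Ω} (hB : MeasurableSet B) :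
    M.toFun B + M.toFun Bᶜ = 1 := by
  refine eq_of_re_inner_eq ((M.isPositive B hB).add (M.isPositive Bᶜ hB.compl))
    ContinuousLinearMap.isPositive_one fun φ => ?_
  have h := measureReal_add_measureReal_compl (μ := M.scalarMeasure φ) hB
  rw [scalarMeasure_real_apply M φ hB, scalarMeasure_real_apply M φ hB.compl,
    scalarMeasure_real_apply M φ .univ, M.normalized] at h
  rw [add_apply, inner_add_right, Complex.add_re, h]

lemma toFun_compl {B : Set Ω} (hB : MeasurableSet B) : M.toFun Bᶜ = 1 - M.toFun B :=
  eq_sub_of_add_eq' (M.toFun_add_toFun_compl hB)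

lemma toFun_nonneg {B : Set Ω} (hB : MeasurableSet B) : 0 ≤ M.toFun B :=
  (ContinuousLinearMap.nonneg_iff_isPositive _).2 (M.isPositive B hB)

lemma toFun_le_one {B : Set Ω} (hB : MeasurableSet B) : M.toFun B ≤ 1 :=
  sub_nonneg.1 (M.toFun_compl hB ▸ M.toFun_nonneg hB.compl)

/-- Extremality of `M` in the class of POVMs with property `P`. Two POVMs are identified when they
agree on measurable sets, since `POVM.toFun` takes arbitrary values elsewhere. -/
def IsExtremeAmong (P : POVM Ω H → Prop) (M : POVM Ω H) : Prop :=
  ∀ M₁ M₂ : POVM Ω H, P M₁ → P M₂ → ∀ t : ℝ, 0 < t → t < 1 →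
    (∀ B : Set Ω, MeasurableSet B →
      M.toFun B = (t : ℂ) • M₁.toFun B + ((1 - t : ℝ) : ℂ) • M₂.toFun B) →
    ∀ B : Set Ω, MeasurableSet B → M₁.toFun B = M.toFun B ∧ M₂.toFun B = M.toFun B

lemma toFun_eq_of_isIdempotentElem {M M₁ M₂ : POVM Ω H} {t : ℝ} (ht₀ : 0 < t) (ht₁ : t < 1)
    (h : ∀ B : Set Ω, MeasurableSet B →
      M.toFun B = (t : ℂ) • M₁.toFun B + ((1 - t : ℝ) : ℂ) • M₂.toFun B)
    {B : Set Ω} (hB : MeasurableSet B) (hM : IsIdempotentElem (M.toFun B)) :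
    M₁.toFun B = M.toFun B := by
  have smul_le : ∀ C, MeasurableSet C → t • M₁.toFun C ≤ M.toFun C := fun C hC => by
    rw [h C hC, Complex.coe_smul, Complex.coe_smul]
    exact le_add_of_nonneg_right (smul_nonneg (sub_pos.2 ht₁).le (M₂.toFun_nonneg hC))
  refine eq_of_isStarProjection_of_smul_le ⟨hM, (M.isPositive B hB).isSelfAdjoint⟩
    (M₁.toFun_nonneg hB) (M₁.toFun_le_one hB) ht₀ (smul_le B hB) ?_
  rw [← M₁.toFun_compl hB, ← M.toFun_compl hB]
  exact smul_le Bᶜ hB.compl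

lemma isExtremeAmong_of_isIdempotentElem (P : POVM Ω H → Prop) {M : POVM Ω H}
    (hM : ∀ B, MeasurableSet B → IsIdempotentElem (M.toFun B)) : M.IsExtremeAmong P := by
  intro M₁ M₂ _ _ t ht₀ ht₁ h B hB
  refine ⟨toFun_eq_of_isIdempotentElem ht₀ ht₁ h hB (hM B hB),
    toFun_eq_of_isIdempotentElem (M₂ := M₁) (sub_pos.2 ht₁) (sub_lt_self 1 ht₀)
      (fun C hC => ?_) hB (hM B hB)⟩
  rw [h C hC, add_comm, sub_sub_cancel]

end Basic

end POVM

section Fourier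

variable {E : Type*} [NormedAddCommGroup E] [NormedSpace ℝ E] [MeasurableSpace E]
  {μ : Measure E}

lemma integrable_exp_mul [OpensMeasurableSpace E] {f : E → ℂ} (hf : Integrable f μ)
    (L : StrongDual ℝ E) :
    Integrable (fun x => Complex.exp (L x * Complex.I) * f x) μ :=
  hf.bdd_mul (c := 1) (Continuous.aestronglyMeasurable (by fun_prop))
    (.of_forall fun x => (Complex.norm_exp_ofReal_mul_I (L x)).le)

lemma charFunDual_withDensity_ofReal {f : E → ℝ} (hf : AEMeasurable f μ) (L : StrongDual ℝ E) :
    charFunDual (μ.withDensity fun x => ENNReal.ofReal (f x)) L =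
      ∫ x, Complex.exp (L x * Complex.I) * (max (f x) 0 : ℝ) ∂μ := by
  rw [charFunDual_apply,
    integral_withDensity_eq_integral_toReal_smul₀ hf.ennreal_ofReal (by simp)]
  simp only [ENNReal.toReal_ofReal', Complex.real_smul, mul_comm]

variable [BorelSpace E] [SecondCountableTopology E] [CompleteSpace E]

lemma ae_eq_zero_of_forall_integral_exp_mul_ofReal_eq_zero {g : E → ℝ} (hg : Integrable g μ)
    (h : ∀ L : StrongDual ℝ E, ∫ x, Complex.exp (L x * Complex.I) * (g x : ℂ) ∂μ = 0) :
    g =ᵐ[μ] 0 := by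
  have := isFiniteMeasure_withDensity hg.lintegral_lt_top.ne
  have hg' : Integrable (fun x => -g x) μ := hg.neg
  have := isFiniteMeasure_withDensity hg'.lintegral_lt_top.ne
  have pos_eq_neg : μ.withDensity (fun x => ENNReal.ofReal (g x)) =
      μ.withDensity fun x => ENNReal.ofReal (-g x) := by
    refine Measure.ext_of_charFunDual (funext fun L => sub_eq_zero.1 ?_)
    rw [charFunDual_withDensity_ofReal hg.aemeasurable,
      charFunDual_withDensity_ofReal hg'.aemeasurable,
      ← integral_sub (integrable_exp_mul (f := fun x => (max (g x) 0 : ℝ)) hg.pos_part.ofReal L)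
        (integrable_exp_mul (f := fun x => (max (-g x) 0 : ℝ)) hg.neg_part.ofReal L), ← h L]
    simp only [← mul_sub, ← Complex.ofReal_sub, max_zero_sub_max_neg_zero_eq_self]
  rw [withDensity_eq_iff hg.aemeasurable.ennreal_ofReal hg'.aemeasurable.ennreal_ofReal
    hg.lintegral_lt_top.ne] at pos_eq_neg
  filter_upwards [pos_eq_neg] with x hx
  have hx := congrArg ENNReal.toReal hx
  rw [ENNReal.toReal_ofReal', ENNReal.toReal_ofReal'] at hx
  rw [← max_zero_sub_max_neg_zero_eq_self (g x)]
  exact sub_eq_zero.2 hx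

lemma ae_eq_zero_of_forall_integral_exp_mul_eq_zero {g : E → ℂ} (hg : Integrable g μ)
    (h : ∀ L : StrongDual ℝ E, ∫ x, Complex.exp (L x * Complex.I) * g x ∂μ = 0) :
    g =ᵐ[μ] 0 := by
  have hg' : Integrable (fun x => conj (g x)) μ :=
    Complex.conjCLE.toContinuousLinearMap.integrable_comp hg
  have h' : ∀ L : StrongDual ℝ E, ∫ x, Complex.exp (L x * Complex.I) * conj (g x) ∂μ = 0 := by
    intro L
    rw [← map_zero conj, ← h (-L), ← integral_conj]
    simp [← Complex.exp_conj]
  have hre : (fun x => (g x).re) =ᵐ[μ] 0 := by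
    refine ae_eq_zero_of_forall_integral_exp_mul_ofReal_eq_zero hg.re fun L => ?_
    simp only [Complex.re_eq_add_conj, ← mul_div_assoc, mul_add]
    rw [integral_div, integral_add (integrable_exp_mul hg L) (integrable_exp_mul hg' L), h, h',
      add_zero, zero_div]
  have him : (fun x => (g x).im) =ᵐ[μ] 0 := by
    refine ae_eq_zero_of_forall_integral_exp_mul_ofReal_eq_zero hg.im fun L => ?_
    simp only [Complex.im_eq_sub_conj, ← mul_div_assoc, mul_sub]
    rw [integral_div, integral_sub (integrable_exp_mul hg L) (integrable_exp_mul hg' L), h, h',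
      sub_zero, zero_div]
  filter_upwards [hre, him] with x hxre hxim using Complex.ext hxre hxim

end Fourier

section Multiplication

variable {α : Type*} [MeasurableSpace α] {μ : Measure α}

/-- The measure `|φ(x)|² dμ(x)`: the position distribution of the (unnormalized) state `φ`. -/
noncomputable def positionDensity (φ : Lp ℂ 2 μ) : Measure α :=
  μ.withDensity fun x => ‖φ x‖ₑ ^ 2

lemma measurable_enorm_sq_coeFn (φ : Lp ℂ 2 μ) : Measurable fun x => ‖φ x‖ₑ ^ 2 :=
  (Lp.stronglyMeasurable φ).measurable.enorm.pow_const 2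

lemma lintegral_positionDensity (φ : Lp ℂ 2 μ) {f : α → ℝ≥0∞} (hf : Measurable f) :
    ∫⁻ x, f x ∂positionDensity φ = ∫⁻ x, f x * ‖φ x‖ₑ ^ 2 ∂μ := by
  simp only [positionDensity,
    lintegral_withDensity_eq_lintegral_mul _ (measurable_enorm_sq_coeFn φ) hf, Pi.mul_apply,
    mul_comm]

lemma inner_coeFn_aeEq_mul_sq_norm {φ ψ : Lp ℂ 2 μ} {f : α → ℂ}
    (h : ψ =ᵐ[μ] fun x => f x * φ x) :
    (fun x => ⟪φ x, ψ x⟫) =ᵐ[μ] fun x => f x * (‖φ x‖ ^ 2 : ℝ) := by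
  filter_upwards [h] with x hx
  rw [hx, RCLike.inner_apply, mul_assoc, RCLike.mul_conj]
  simp

lemma integrable_mul_sq_norm {φ ψ : Lp ℂ 2 μ} {f : α → ℂ} (h : ψ =ᵐ[μ] fun x => f x * φ x) :
    Integrable (fun x => (f x).re * ‖φ x‖ ^ 2) μ := by
  refine ((L2.integrable_inner (𝕜 := ℂ) φ ψ).re).congr ?_
  filter_upwards [inner_coeFn_aeEq_mul_sq_norm h] with x hx
  rw [hx]
  exact Complex.re_mul_ofReal _ _

lemma re_inner_eq_integral_re_mul_sq_norm {φ ψ : Lp ℂ 2 μ} {f : α → ℂ}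
    (h : ψ =ᵐ[μ] fun x => f x * φ x) :
    (⟪φ, ψ⟫).re = ∫ x, (f x).re * ‖φ x‖ ^ 2 ∂μ := by
  rw [L2.inner_def]
  refine (integral_re (L2.integrable_inner (𝕜 := ℂ) φ ψ)).symm.trans (integral_congr_ae ?_)
  filter_upwards [inner_coeFn_aeEq_mul_sq_norm h] with x hx
  rw [hx]
  exact Complex.re_mul_ofReal _ _

lemma ofReal_re_inner_eq_lintegral {φ ψ : Lp ℂ 2 μ} {f : α → ℂ} (hf : Measurable f)
    (hf₀ : ∀ᵐ x ∂μ, 0 ≤ (f x).re) (h : ψ =ᵐ[μ] fun x => f x * φ x) :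
    ENNReal.ofReal (⟪φ, ψ⟫).re = ∫⁻ x, ENNReal.ofReal (f x).re ∂positionDensity φ := by
  rw [re_inner_eq_integral_re_mul_sq_norm h,
    ofReal_integral_eq_lintegral_ofReal (integrable_mul_sq_norm h)
      (hf₀.mono fun x hx => mul_nonneg hx (sq_nonneg _)),
    lintegral_positionDensity φ (by fun_prop)]
  refine lintegral_congr_ae (hf₀.mono fun x hx => ?_)
  simp only [ENNReal.ofReal_mul hx, ENNReal.ofReal_pow (norm_nonneg _), ofReal_norm]

lemma positionDensity_univ (φ : Lp ℂ 2 μ) :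
    positionDensity φ univ = ENNReal.ofReal (‖φ‖ ^ 2) := by
  have h := ofReal_re_inner_eq_lintegral (φ := φ) (f := fun _ => 1) measurable_const
    (.of_forall fun _ => zero_le_one) (.of_forall fun x => (one_mul _).symm)
  rw [show (⟪φ, φ⟫).re = ‖φ‖ ^ 2 from inner_self_eq_norm_sq (𝕜 := ℂ) φ] at h
  simpa using h.symm

instance isFiniteMeasure_positionDensity (φ : Lp ℂ 2 μ) : IsFiniteMeasure (positionDensity φ) :=
  ⟨by rw [positionDensity_univ]; exact ENNReal.ofReal_lt_top⟩

lemma isProbabilityMeasure_positionDensity {φ : Lp ℂ 2 μ} (hφ : ‖φ‖ = 1) :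
    IsProbabilityMeasure (positionDensity φ) :=
  ⟨by rw [positionDensity_univ, hφ, one_pow, ENNReal.ofReal_one]⟩

lemma exists_lp_two_ae_ne_zero (μ : Measure α) [SigmaFinite μ] :
    ∃ w : Lp ℂ 2 μ, ∀ᵐ x ∂μ, w x ≠ 0 := by
  obtain ⟨g, hg₀, hgm, hg⟩ := exists_pos_lintegral_lt_of_sigmaFinite μ one_ne_zero
  have hsqrt : MemLp (fun x => √(g x : ℝ)) 2 μ := by
    rw [memLp_two_iff_integrable_sq (by fun_prop)]
    simp only [Real.sq_sqrt NNReal.zero_le_coe]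
    refine ⟨by fun_prop, ?_⟩
    simpa [hasFiniteIntegral_iff_enorm] using hg.trans ENNReal.one_lt_top
  have hsqrt' : MemLp (fun x => (√(g x : ℝ) : ℂ)) 2 μ := hsqrt.ofReal
  refine ⟨hsqrt'.toLp _, ?_⟩
  filter_upwards [hsqrt'.coeFn_toLp] with x hx
  rw [hx]
  simpa [Real.sqrt_eq_zero'] using (hg₀ x).ne'

variable [SigmaFinite μ]

lemma exists_aeEq_mul_of_inner_aeEq {A : Lp ℂ 2 μ →L[ℂ] Lp ℂ 2 μ}
    (hA : ∀ φ ψ : Lp ℂ 2 μ, (fun x => ⟪A φ x, ψ x⟫) =ᵐ[μ] fun x => ⟪φ x, A ψ x⟫) :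
    ∃ f : α → ℂ, Measurable f ∧ ∀ φ : Lp ℂ 2 μ, A φ =ᵐ[μ] fun x => f x * φ x := by
  obtain ⟨w, hw⟩ := exists_lp_two_ae_ne_zero μ
  have hwm := (Lp.stronglyMeasurable w).measurable
  have hAwm := (Lp.stronglyMeasurable (A w)).measurable
  refine ⟨fun x => conj (A w x) / conj (w x), by fun_prop, fun φ => ?_⟩
  filter_upwards [hA w φ, hw] with x hx hwx
  rw [RCLike.inner_apply, RCLike.inner_apply] at hx
  rw [div_mul_eq_mul_div, eq_div_iff ((map_ne_zero conj).2 hwx), ← hx, mul_comm]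

lemma ae_re_nonneg_of_isPositive {A : Lp ℂ 2 μ →L[ℂ] Lp ℂ 2 μ} (hA : A.IsPositive) {f : α → ℂ}
    (hf : ∀ φ : Lp ℂ 2 μ, A φ =ᵐ[μ] fun x => f x * φ x) : ∀ᵐ x ∂μ, 0 ≤ (f x).re := by
  have indicator_eq : ∀ {s} (hs : MeasurableSet s) (hμs : μ s ≠ ∞),
      (fun x => (f x).re * ‖indicatorConstLp 2 hs hμs (1 : ℂ) x‖ ^ 2) =ᵐ[μ]
        s.indicator fun x => (f x).re := fun {s} hs hμs => by
    filter_upwards [indicatorConstLp_coeFn (p := 2) (hs := hs) (hμs := hμs) (c := (1 : ℂ))]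
      with x hx
    rw [hx]
    by_cases hxs : x ∈ s <;> simp [hxs]
  refine ae_nonneg_of_forall_setIntegral_nonneg_of_sigmaFinite (fun s hs hμs => ?_)
    fun s hs hμs => ?_
  · rw [← integrable_indicator_iff hs]
    exact (integrable_mul_sq_norm (hf _)).congr (indicator_eq hs hμs.ne)
  · rw [← integral_indicator hs, ← integral_congr_ae (indicator_eq hs hμs.ne),
      ← re_inner_eq_integral_re_mul_sq_norm (hf _)]
    exact hA.re_inner_nonneg_right _

lemma exists_ofReal_re_inner_eq_lintegral {A : Lp ℂ 2 μ →L[ℂ] Lp ℂ 2 μ} (hA : A.IsPositive)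
    (hA' : ∀ φ ψ : Lp ℂ 2 μ, (fun x => ⟪A φ x, ψ x⟫) =ᵐ[μ] fun x => ⟪φ x, A ψ x⟫) :
    ∃ f : α → ℝ≥0∞, Measurable f ∧
      ∀ φ, ENNReal.ofReal (⟪φ, A φ⟫).re = ∫⁻ x, f x ∂positionDensity φ := by
  obtain ⟨f, hfm, hf⟩ := exists_aeEq_mul_of_inner_aeEq hA'
  exact ⟨fun x => ENNReal.ofReal (f x).re, by fun_prop, fun φ =>
    ofReal_re_inner_eq_lintegral hfm (ae_re_nonneg_of_isPositive hA hf) (hf φ)⟩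

end Multiplication

section Symmetries

variable {E : Type*} [MeasurableSpace E] {μ : Measure E}

/-- Covariance of `M` under the translations `U`: `U(q) M(B) U(q)* = M(B + q)`. -/
def POVM.IsTranslationCovariant [Add E] (U : E → (Lp ℂ 2 μ ≃ₗᵢ[ℂ] Lp ℂ 2 μ))
    (M : POVM E (Lp ℂ 2 μ)) : Prop :=
  ∀ q : E, ∀ B : Set E, MeasurableSet B → ∀ φ ψ : Lp ℂ 2 μ,
    ⟪U q φ, M.toFun ((fun x => x + q) '' B) (U q ψ)⟫ = ⟪φ, M.toFun B ψ⟫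

/-- Invariance of `M` under the unitaries `V`, such as the momentum boosts:
`V(p) M(B) V(p)* = M(B)`. -/
def POVM.IsInvariant {Ω H ι : Type*} [MeasurableSpace Ω] [NormedAddCommGroup H]
    [InnerProductSpace ℂ H] [CompleteSpace H] (V : ι → (H ≃ₗᵢ[ℂ] H)) (M : POVM Ω H) : Prop :=
  ∀ p : ι, ∀ B : Set Ω, MeasurableSet B → ∀ φ ψ : H, ⟪V p φ, M.toFun B (V p ψ)⟫ = ⟪φ, M.toFun B ψ⟫

section Boosts

variable [NormedAddCommGroup E] [NormedSpace ℝ E] [BorelSpace E] [SecondCountableTopology E]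
  [CompleteSpace E] {ι : Type*} {V : ι → (Lp ℂ 2 μ ≃ₗᵢ[ℂ] Lp ℂ 2 μ)} {ℓ : ι → StrongDual ℝ E}

lemma inner_aeEq_of_forall_inner_boost (hℓ : Function.Surjective ℓ)
    (hV : ∀ p φ, V p φ =ᵐ[μ] fun x => Complex.exp (Complex.I * ℓ p x) * φ x)
    {A : Lp ℂ 2 μ →L[ℂ] Lp ℂ 2 μ} (hA : A.IsPositive)
    (hVA : ∀ p φ ψ, ⟪V p φ, A (V p ψ)⟫ = ⟪φ, A ψ⟫) (φ ψ : Lp ℂ 2 μ) :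
    (fun x => ⟪A φ x, ψ x⟫) =ᵐ[μ] fun x => ⟪φ x, A ψ x⟫ := by
  have inner_boost : ∀ p, ⟪A φ, V p ψ⟫ = ⟪φ, V p (A ψ)⟫ := fun p => by
    have h := hVA p ((V p).symm φ) ψ
    rw [(V p).apply_symm_apply] at h
    rw [hA.inner_left_eq_inner_right, h, ← (V p).inner_map_map, (V p).apply_symm_apply]
  have inner_boost_eq_integral : ∀ p (χ η : Lp ℂ 2 μ),
      ⟪χ, V p η⟫ = ∫ x, Complex.exp (ℓ p x * Complex.I) * ⟪χ x, η x⟫ ∂μ := fun p χ η => by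
    rw [L2.inner_def]
    refine integral_congr_ae ((hV p η).mono fun x hx => ?_)
    simp only [hx, RCLike.inner_apply, mul_comm Complex.I, mul_assoc]
  have hint₁ : Integrable (fun x => ⟪A φ x, ψ x⟫) μ := L2.integrable_inner (A φ) ψ
  have hint₂ : Integrable (fun x => ⟪φ x, A ψ x⟫) μ := L2.integrable_inner φ (A ψ)
  refine (ae_eq_zero_of_forall_integral_exp_mul_eq_zero (hint₁.sub hint₂)
    (hℓ.forall.2 fun p => ?_)).mono fun x hx => sub_eq_zero.1 hx
  simp only [Pi.sub_apply, mul_sub]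
  rw [integral_sub (integrable_exp_mul hint₁ _) (integrable_exp_mul hint₂ _),
    ← inner_boost_eq_integral, ← inner_boost_eq_integral, inner_boost, sub_self]

lemma POVM.IsInvariant.exists_scalarMeasure_eq_lintegral [SigmaFinite μ]
    (hℓ : Function.Surjective ℓ)
    (hV : ∀ p φ, V p φ =ᵐ[μ] fun x => Complex.exp (Complex.I * ℓ p x) * φ x)
    {M : POVM E (Lp ℂ 2 μ)} (hM : M.IsInvariant V) {B : Set E} (hB : MeasurableSet B) :
    ∃ f : E → ℝ≥0∞, Measurable f ∧
      ∀ φ, M.scalarMeasure φ B = ∫⁻ x, f x ∂positionDensity φ := by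
  have hA := M.isPositive B hB
  simpa only [M.scalarMeasure_apply _ hB] using exists_ofReal_re_inner_eq_lintegral hA
    (inner_aeEq_of_forall_inner_boost hℓ hV hA fun p => hM p B hB)

end Boosts

section Translations

variable [AddCommGroup E] [MeasurableAdd₂ E] {U : E → (Lp ℂ 2 μ ≃ₗᵢ[ℂ] Lp ℂ 2 μ)}

lemma positionDensity_translate [μ.IsAddRightInvariant]
    (hU : ∀ q φ, U q φ =ᵐ[μ] fun x => φ (x - q)) (q : E) (φ : Lp ℂ 2 μ) :
    positionDensity (U q φ) = (positionDensity φ).map (· + q) := by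
  have hq : MeasurePreserving (· + q) μ μ := measurePreserving_add_right μ q
  ext B hB
  rw [Measure.map_apply hq.measurable hB, positionDensity, positionDensity,
    withDensity_apply _ hB, withDensity_apply _ (hq.measurable hB),
    setLIntegral_congr_fun_ae hB ((hU q φ).mono fun x hx _ => by rw [hx]),
    ← hq.setLIntegral_comp_preimage_emb (MeasurableEquiv.addRight q).measurableEmbedding]
  simp only [add_sub_cancel_right]

lemma POVM.IsTranslationCovariant.scalarMeasure_map {M : POVM E (Lp ℂ 2 μ)}
    (hM : M.IsTranslationCovariant U) (q : E) (φ : Lp ℂ 2 μ) :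
    M.scalarMeasure (U q φ) = (M.scalarMeasure φ).map (· + q) := by
  ext B hB
  have hB' : MeasurableSet ((· + q) ⁻¹' B) := measurable_add_const q hB
  rw [Measure.map_apply (measurable_add_const q) hB, M.scalarMeasure_apply _ hB',
    M.scalarMeasure_apply _ hB, ← hM q _ hB',
    image_preimage_eq B (add_right_surjective q)]

lemma conv_apply_eq_lintegral (ν ρ : Measure E) [SFinite ρ] {B : Set E} (hB : MeasurableSet B) :
    (ν ∗ ρ) B = ∫⁻ x, ρ.map (· + x) B ∂ν := by
  rw [← lintegral_indicator_one hB, Measure.lintegral_conv (measurable_one.indicator hB)]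
  refine lintegral_congr fun x => ?_
  rw [← lintegral_indicator_one hB,
    lintegral_map (measurable_one.indicator hB) (measurable_add_const x)]
  simp only [add_comm]

lemma POVM.IsTranslationCovariant.positionDensity_conv_scalarMeasure_comm
    [μ.IsAddRightInvariant] (hU : ∀ q φ, U q φ =ᵐ[μ] fun x => φ (x - q))
    {M : POVM E (Lp ℂ 2 μ)} (hM : M.IsTranslationCovariant U)
    (hf : ∀ B : Set E, MeasurableSet B → ∃ f : E → ℝ≥0∞, Measurable f ∧
      ∀ φ, M.scalarMeasure φ B = ∫⁻ x, f x ∂positionDensity φ) (φ φ' : Lp ℂ 2 μ) :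
    positionDensity φ ∗ M.scalarMeasure φ' = positionDensity φ' ∗ M.scalarMeasure φ := by
  ext B hB
  obtain ⟨f, hfm, hf⟩ := hf B hB
  have conv_apply : ∀ φ φ' : Lp ℂ 2 μ, (positionDensity φ ∗ M.scalarMeasure φ') B =
      ∫⁻ x, f x ∂(positionDensity φ ∗ positionDensity φ') := fun φ φ' => by
    rw [conv_apply_eq_lintegral _ _ hB, Measure.lintegral_conv hfm]
    refine lintegral_congr fun q => ?_
    rw [← hM.scalarMeasure_map, hf, positionDensity_translate hU,
      lintegral_map hfm (measurable_add_const q)]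
    simp only [add_comm]
  rw [conv_apply, conv_apply, Measure.conv_comm]

end Translations

end Symmetries

section Deconvolution

variable {E : Type*} [NormedAddCommGroup E] [MeasurableSpace E] [BorelSpace E]

lemma measurableSet_lt_norm (r : ℝ) : MeasurableSet {x : E | r < ‖x‖} :=
  measurableSet_lt measurable_const measurable_norm

section Tails

variable [SecondCountableTopology E] {ν ρ : Measure E} [IsProbabilityMeasure ν] [SFinite ρ] {δ : ℝ}

lemma conv_lt_norm_le (hν : ∀ᵐ x ∂ν, ‖x‖ ≤ δ) (r : ℝ) :
    (ν ∗ ρ) {x | r + δ < ‖x‖} ≤ ρ {x | r < ‖x‖} := by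
  rw [conv_apply_eq_lintegral ν ρ (measurableSet_lt_norm _)]
  refine (lintegral_mono_ae (hν.mono fun x hx => ?_)).trans_eq
    (show ∫⁻ _, ρ {x | r < ‖x‖} ∂ν = _ by simp)
  rw [Measure.map_apply (measurable_add_const x) (measurableSet_lt_norm _)]
  refine measure_mono fun y (hy : r + δ < ‖y + x‖) => ?_
  change r < ‖y‖
  linarith [norm_add_le y x]

lemma le_conv_lt_norm (hν : ∀ᵐ x ∂ν, ‖x‖ ≤ δ) (r : ℝ) :
    ρ {x | r + δ < ‖x‖} ≤ (ν ∗ ρ) {x | r < ‖x‖} := by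
  rw [conv_apply_eq_lintegral ν ρ (measurableSet_lt_norm _)]
  refine Eq.trans_le (show _ = ∫⁻ _, ρ {x | r + δ < ‖x‖} ∂ν by simp)
    (lintegral_mono_ae (hν.mono fun x hx => ?_))
  rw [Measure.map_apply (measurable_add_const x) (measurableSet_lt_norm _)]
  refine measure_mono fun y (hy : r + δ < ‖y‖) => ?_
  change r < ‖y + x‖
  linarith [norm_le_add_norm_add y x]

end Tails

lemma isTightMeasureSet_range_of_conv_comm [ProperSpace E] {ν m : ℕ → Measure E}
    [∀ k, IsProbabilityMeasure (ν k)] [∀ k, IsFiniteMeasure (m k)]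
    {δ : ℝ} (hν : ∀ k, ∀ᵐ x ∂ν k, ‖x‖ ≤ δ) (hm : ∀ j k, ν j ∗ m k = ν k ∗ m j) :
    IsTightMeasureSet (range m) := by
  have tail_le : ∀ k r, m k {x | r + δ + δ < ‖x‖} ≤ m 0 {x | r < ‖x‖} := fun k r =>
    calc m k {x | r + δ + δ < ‖x‖}
        ≤ (ν 0 ∗ m k) {x | r + δ < ‖x‖} := le_conv_lt_norm (hν 0) _
      _ = (ν k ∗ m 0) {x | r + δ < ‖x‖} := by rw [hm]
      _ ≤ m 0 {x | r < ‖x‖} := conv_lt_norm_le (hν k) _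
  have tail_zero : Tendsto (fun r : ℝ => m 0 {x | r < ‖x‖}) atTop (𝓝 0) := by
    simpa using
      tendsto_measure_norm_gt_of_isTightMeasureSet (isTightMeasureSet_singleton (μ := m 0))
  refine isTightMeasureSet_of_tendsto_measure_norm_gt (tendsto_of_tendsto_of_tendsto_of_le_of_le
    tendsto_const_nhds (tail_zero.comp (tendsto_atTop_add_const_right _ (-δ - δ) tendsto_id))
    (fun _ => zero_le) fun r => ?_)
  rw [iSup_range]
  refine iSup_le fun k => ?_
  simpa [add_assoc] using tail_le k (r + (-δ - δ))

variable [NormedSpace ℝ E]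

lemma norm_charFunDual_sub_one_le {ν : Measure E} [IsProbabilityMeasure ν] {r : ℝ}
    (hν : ∀ᵐ x ∂ν, ‖x‖ ≤ r) (L : StrongDual ℝ E) : ‖charFunDual ν L - 1‖ ≤ ‖L‖ * r := by
  have hint : Integrable (fun x => Complex.exp (L x * Complex.I)) ν := by
    simpa using integrable_exp_mul (integrable_const (1 : ℂ)) L
  have h : charFunDual ν L - 1 = ∫ x, (Complex.exp (L x * Complex.I) - 1) ∂ν := by
    rw [integral_sub hint (integrable_const _), charFunDual_apply]
    simp
  rw [h]
  refine (norm_integral_le_of_norm_le_const (hν.mono fun x hx => ?_)).trans_eq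
    (by rw [probReal_univ, mul_one])
  calc ‖Complex.exp (L x * Complex.I) - 1‖ ≤ ‖L x‖ := by
        rw [mul_comm]
        exact Real.norm_exp_I_mul_ofReal_sub_one_le
    _ ≤ ‖L‖ * ‖x‖ := L.le_opNorm x
    _ ≤ ‖L‖ * r := by gcongr

lemma tendsto_charFunDual_one {ν : ℕ → Measure E} [∀ k, IsProbabilityMeasure (ν k)] {r : ℕ → ℝ}
    (hν : ∀ k, ∀ᵐ x ∂ν k, ‖x‖ ≤ r k) (hr : Tendsto r atTop (𝓝 0)) (L : StrongDual ℝ E) :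
    Tendsto (fun k => charFunDual (ν k) L) atTop (𝓝 1) := by
  rw [tendsto_iff_norm_sub_tendsto_zero]
  exact squeeze_zero (fun _ => norm_nonneg _) (fun k => norm_charFunDual_sub_one_le (hν k) L)
    (by simpa using hr.const_mul ‖L‖)

lemma eq_of_conv_eq [SecondCountableTopology E] [CompleteSpace E] {ν : ℕ → Measure E}
    [∀ k, IsProbabilityMeasure (ν k)] {r : ℕ → ℝ} (hν : ∀ k, ∀ᵐ x ∂ν k, ‖x‖ ≤ r k)
    (hr : Tendsto r atTop (𝓝 0)) {ρ ρ' : Measure E} [IsFiniteMeasure ρ] [IsFiniteMeasure ρ']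
    (h : ∀ k, ν k ∗ ρ = ν k ∗ ρ') : ρ = ρ' := by
  refine Measure.ext_of_charFunDual (funext fun L => ?_)
  have hρ := (tendsto_charFunDual_one hν hr L).mul_const (charFunDual ρ L)
  have hρ' := (tendsto_charFunDual_one hν hr L).mul_const (charFunDual ρ' L)
  simp only [← charFunDual_conv, h, one_mul] at hρ hρ'
  exact tendsto_nhds_unique hρ hρ'

-- `ρ` is a weak limit of the `m (u k)`: as `ν (u k)` tends to the Dirac measure at `0`, the
-- relation `ν (u k) ∗ m i = ν i ∗ m (u k)` tends to `m i = ν i ∗ ρ`.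
lemma exists_isProbabilityMeasure_forall_eq_conv [ProperSpace E] {ι : Type*} {ν m : ι → Measure E}
    [∀ i, IsFiniteMeasure (ν i)] [∀ i, IsFiniteMeasure (m i)]
    (hm : ∀ i j, ν i ∗ m j = ν j ∗ m i) {u : ℕ → ι} [∀ k, IsProbabilityMeasure (ν (u k))]
    [∀ k, IsProbabilityMeasure (m (u k))] {r : ℕ → ℝ} (hν : ∀ k, ∀ᵐ x ∂ν (u k), ‖x‖ ≤ r k)
    (hr : Tendsto r atTop (𝓝 0)) :
    ∃ ρ : Measure E, IsProbabilityMeasure ρ ∧ ∀ i, m i = ν i ∗ ρ := by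
  let P : ℕ → ProbabilityMeasure E := fun k => ⟨m (u k), inferInstance⟩
  obtain ⟨δ, hδ⟩ := hr.bddAbove_range
  have tight : IsTightMeasureSet (range fun k => m (u k)) :=
    isTightMeasureSet_range_of_conv_comm (ν := fun k => ν (u k))
      (fun k => (hν k).mono fun x hx => hx.trans (hδ (mem_range_self k))) fun j k => hm _ _
  have compact : IsCompact (closure (range P)) :=
    isCompact_closure_of_isTightMeasureSet (tight.subset
      (by rintro _ ⟨_, ⟨k, rfl⟩, rfl⟩; exact mem_range_self k))
  obtain ⟨ρ, -, s, hs, hρ⟩ := compact.tendsto_subseq fun k => subset_closure (mem_range_self k)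
  rw [ProbabilityMeasure.tendsto_iff_forall_integral_rclike_tendsto ℂ] at hρ
  refine ⟨ρ, inferInstance, fun i => Measure.ext_of_charFunDual (funext fun L => ?_)⟩
  have hleft := ((tendsto_charFunDual_one hν hr L).comp hs.tendsto_atTop).mul_const
    (charFunDual (m i) L)
  have hright := (hρ (BoundedContinuousFunction.probCharDual L)).const_mul (charFunDual (ν i) L)
  rw [charFunDual_conv, ← one_mul (charFunDual (m i) L)]
  refine tendsto_nhds_unique hleft (hright.congr fun k => ?_)
  change charFunDual (ν i) L * charFunDual (m (u (s k))) L = _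
  rw [← charFunDual_conv, hm, charFunDual_conv]
  rfl

end Deconvolution

section Bumps

variable {α : Type*} [MeasurableSpace α] {μ : Measure α}

lemma exists_norm_eq_one_ae_positionDensity_mem {s : Set α} (hs : MeasurableSet s)
    (hs₀ : μ s ≠ 0) (hs' : μ s ≠ ∞) :
    ∃ φ : Lp ℂ 2 μ, ‖φ‖ = 1 ∧ ∀ᵐ x ∂positionDensity φ, x ∈ s := by
  set ψ : Lp ℂ 2 μ := indicatorConstLp 2 hs hs' 1 with hψ
  have hψ₀ : ψ ≠ 0 := by
    rw [← norm_ne_zero_iff, hψ, norm_indicatorConstLp (by simp) (by simp), norm_one, one_mul]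
    exact (Real.rpow_pos_of_pos (ENNReal.toReal_pos hs₀ hs') _).ne'
  refine ⟨(‖ψ‖⁻¹ : ℂ) • ψ, norm_smul_inv_norm hψ₀, ?_⟩
  rw [positionDensity, ae_withDensity_iff (measurable_enorm_sq_coeFn _)]
  filter_upwards [Lp.coeFn_smul (‖ψ‖⁻¹ : ℂ) ψ, indicatorConstLp_coeFn (p := 2) (hs := hs)
    (hμs := hs') (c := (1 : ℂ))] with x hx hxs
  contrapose!
  intro hxs'
  rw [hx, Pi.smul_apply, hxs, indicator_of_notMem hxs', smul_zero, enorm_zero, zero_pow two_ne_zero]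

lemma exists_seq_ae_positionDensity_norm_le {E : Type*} [NormedAddCommGroup E] [MeasurableSpace E]
    [OpensMeasurableSpace E] [ProperSpace E] (μ : Measure E) [IsFiniteMeasureOnCompacts μ]
    [μ.IsOpenPosMeasure] :
    ∃ (φ : ℕ → Lp ℂ 2 μ) (r : ℕ → ℝ), (∀ k, ‖φ k‖ = 1) ∧
      (∀ k, ∀ᵐ x ∂positionDensity (φ k), ‖x‖ ≤ r k) ∧ Tendsto r atTop (𝓝 0) := by
  have hr₀ : ∀ k : ℕ, 0 < 1 / ((k : ℝ) + 1) := fun k => Nat.one_div_pos_of_nat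
  choose φ hφ hφr using fun k => exists_norm_eq_one_ae_positionDensity_mem (μ := μ)
    Metric.isClosed_closedBall.measurableSet (Metric.measure_closedBall_pos μ 0 (hr₀ k)).ne'
    measure_closedBall_lt_top.ne
  exact ⟨φ, _, hφ, fun k => (hφr k).mono fun x hx => mem_closedBall_zero_iff.1 hx,
    tendsto_one_div_add_atTop_nhds_zero_nat⟩

end Bumps

section MultiplicationOperator

variable {α : Type*} [MeasurableSpace α] {μ : Measure α} {f g : α → ℂ}

/-- Multiplication by `f` as a bounded operator on `L²(μ)`. It is `0` when `f` is not essentially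
bounded. -/
noncomputable def mulOp (μ : Measure α) (f : α → ℂ) : Lp ℂ 2 μ →L[ℂ] Lp ℂ 2 μ :=
  if hf : MemLp f ∞ μ then (ContinuousLinearMap.mul ℂ ℂ).holderL μ ∞ 2 2 (hf.toLp f) else 0

lemma mulOp_of_memLp (hf : MemLp f ∞ μ) :
    mulOp μ f = (ContinuousLinearMap.mul ℂ ℂ).holderL μ ∞ 2 2 (hf.toLp f) :=
  dif_pos hf

lemma coeFn_mulOp (hf : MemLp f ∞ μ) (φ : Lp ℂ 2 μ) : mulOp μ f φ =ᵐ[μ] fun x => f x * φ x := by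
  rw [mulOp_of_memLp hf, ContinuousLinearMap.holderL_apply_apply]
  filter_upwards [(ContinuousLinearMap.mul ℂ ℂ).coeFn_holder (r := 2) (hf.toLp f) φ,
    hf.coeFn_toLp] with x hx hfx
  rw [hx, hfx, ContinuousLinearMap.mul_apply']

lemma mulOp_add (hf : MemLp f ∞ μ) (hg : MemLp g ∞ μ) :
    mulOp μ (f + g) = mulOp μ f + mulOp μ g := by
  rw [mulOp_of_memLp hf, mulOp_of_memLp hg, mulOp_of_memLp (hf.add hg), MemLp.toLp_add, map_add]

lemma mulOp_const_smul (c : ℂ) (hf : MemLp f ∞ μ) : mulOp μ (c • f) = c • mulOp μ f := by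
  rw [mulOp_of_memLp hf, mulOp_of_memLp (hf.const_smul c), MemLp.toLp_const_smul, map_smul]

lemma mulOp_one : mulOp μ 1 = 1 := by
  ext φ
  exact (coeFn_mulOp (memLp_top_const 1) φ).trans (.of_forall fun x => one_mul _)

lemma inner_mulOp (hf : MemLp f ∞ μ) (φ ψ : Lp ℂ 2 μ) :
    ⟪φ, mulOp μ f ψ⟫ = ∫ x, f x * ⟪φ x, ψ x⟫ ∂μ := by
  rw [L2.inner_def]
  refine integral_congr_ae ((coeFn_mulOp hf ψ).mono fun x hx => ?_)
  simp only [hx, RCLike.inner_apply, mul_assoc]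

lemma isPositive_mulOp_ofReal {f : α → ℝ} (hf : MemLp (fun x => (f x : ℂ)) ∞ μ)
    (hf₀ : ∀ x, 0 ≤ f x) : (mulOp μ fun x => (f x : ℂ)).IsPositive := by
  refine (ContinuousLinearMap.isPositive_iff_complex _).2 fun φ => ?_
  have h : ⟪φ, mulOp μ (fun x => (f x : ℂ)) φ⟫ = (∫ x, f x * ‖φ x‖ ^ 2 ∂μ : ℝ) := by
    rw [inner_mulOp hf, ← integral_complex_ofReal]
    refine integral_congr_ae (.of_forall fun x => ?_)
    simp [inner_self_eq_norm_sq_to_K]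
  rw [← inner_conj_symm, h, Complex.conj_ofReal]
  exact ⟨rfl, integral_nonneg fun x => mul_nonneg (hf₀ x) (sq_nonneg _)⟩

end MultiplicationOperator

section OfKernel

variable {α Ω : Type*} [MeasurableSpace α] [MeasurableSpace Ω] {μ : Measure α}

lemma measurable_kernel_real (κ : Kernel α Ω) {B : Set Ω} (hB : MeasurableSet B) :
    Measurable fun x => (κ x).real B :=
  (κ.measurable_coe hB).ennreal_toReal

variable (κ : Kernel α Ω) [IsMarkovKernel κ]

lemma memLp_top_kernel_real {B : Set Ω} (hB : MeasurableSet B) :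
    MemLp (fun x => ((κ x).real B : ℂ)) ∞ μ := by
  refine memLp_top_of_bound
    (Complex.measurable_ofReal.comp (measurable_kernel_real κ hB)).aestronglyMeasurable 1
    (.of_forall fun x => ?_)
  rw [Complex.norm_of_nonneg measureReal_nonneg]
  exact measureReal_le_one

variable [SFinite μ]

lemma integrable_inner_fst_compProd (φ ψ : Lp ℂ 2 μ) :
    Integrable (fun z : α × Ω => ⟪φ z.1, ψ z.1⟫) (μ ⊗ₘ κ) := by
  have h : Integrable (fun x => ⟪φ x, ψ x⟫) (μ ⊗ₘ κ).fst := by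
    rw [Measure.fst_compProd]
    exact L2.integrable_inner φ ψ
  exact h.comp_measurable measurable_fst

lemma inner_mulOp_kernel_real {B : Set Ω} (hB : MeasurableSet B) (φ ψ : Lp ℂ 2 μ) :
    ⟪φ, mulOp μ (fun x => ((κ x).real B : ℂ)) ψ⟫ =
      ∫ z in Prod.snd ⁻¹' B, ⟪φ z.1, ψ z.1⟫ ∂(μ ⊗ₘ κ) := by
  rw [inner_mulOp (memLp_top_kernel_real κ hB), ← univ_prod,
    Measure.setIntegral_compProd .univ hB (integrable_inner_fst_compProd κ φ ψ).integrableOn]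
  simp only [Measure.restrict_univ, setIntegral_const, Complex.real_smul]

/-- The smeared position observable of the Markov kernel `κ`: the POVM whose value at `B` is
multiplication by `x ↦ κ x B`. -/
noncomputable def POVM.ofKernel (μ : Measure α) [SFinite μ] (κ : Kernel α Ω) [IsMarkovKernel κ] :
    POVM Ω (Lp ℂ 2 μ) where
  toFun B := mulOp μ fun x => ((κ x).real B : ℂ)
  isPositive _ hB :=
    isPositive_mulOp_ofReal (memLp_top_kernel_real κ hB) fun _ => measureReal_nonneg
  normalized := by
    simp only [probReal_univ, Complex.ofReal_one]
    exact mulOp_one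
  m_iUnion B hB hd φ ψ := by
    simp only [inner_mulOp_kernel_real κ (MeasurableSet.iUnion hB),
      inner_mulOp_kernel_real κ (hB _), preimage_iUnion]
    exact hasSum_integral_iUnion (fun k => measurable_snd (hB k))
      (fun i j hij => (hd hij).preimage _) (integrable_inner_fst_compProd κ φ ψ).integrableOn

namespace POVM

lemma coeFn_ofKernel {B : Set Ω} (hB : MeasurableSet B) (φ : Lp ℂ 2 μ) :
    (ofKernel μ κ).toFun B φ =ᵐ[μ] fun x => ((κ x).real B : ℂ) * φ x :=
  coeFn_mulOp (memLp_top_kernel_real κ hB) φ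

lemma inner_ofKernel {B : Set Ω} (hB : MeasurableSet B) (φ ψ : Lp ℂ 2 μ) :
    ⟪φ, (ofKernel μ κ).toFun B ψ⟫ = ∫ x, ((κ x).real B : ℂ) * ⟪φ x, ψ x⟫ ∂μ :=
  inner_mulOp (memLp_top_kernel_real κ hB) φ ψ

lemma ofKernel_eq_add {κ κ₁ κ₂ : Kernel α Ω} [IsMarkovKernel κ] [IsMarkovKernel κ₁]
    [IsMarkovKernel κ₂] {s t : ℝ} {B : Set Ω} (hB : MeasurableSet B)
    (h : ∀ x, (κ x).real B = s * (κ₁ x).real B + t * (κ₂ x).real B) :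
    (ofKernel μ κ).toFun B =
      (s : ℂ) • (ofKernel μ κ₁).toFun B + (t : ℂ) • (ofKernel μ κ₂).toFun B := by
  have h₁ := memLp_top_kernel_real κ₁ hB (μ := μ)
  have h₂ := memLp_top_kernel_real κ₂ hB (μ := μ)
  calc mulOp μ (fun x => ((κ x).real B : ℂ))
      = mulOp μ ((s : ℂ) • (fun x => ((κ₁ x).real B : ℂ)) +
          (t : ℂ) • fun x => ((κ₂ x).real B : ℂ)) := by
        congr 1
        ext x
        simp [h x]
    _ = _ := by
        rw [mulOp_add (h₁.const_smul _) (h₂.const_smul _), mulOp_const_smul _ h₁,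
          mulOp_const_smul _ h₂]
        rfl

lemma isInvariant_ofKernel {ι : Type*} {V : ι → (Lp ℂ 2 μ ≃ₗᵢ[ℂ] Lp ℂ 2 μ)} {θ : ι → α → ℝ}
    (hV : ∀ p φ, V p φ =ᵐ[μ] fun x => Complex.exp (Complex.I * θ p x) * φ x) :
    (ofKernel μ κ).IsInvariant V := by
  intro p B hB φ ψ
  have inner_mul_left_right : ∀ {a : ℂ}, ‖a‖ = 1 → ∀ z w : ℂ, ⟪a * z, a * w⟫ = ⟪z, w⟫ :=
    fun {a} ha z w => by
      rw [RCLike.inner_apply, RCLike.inner_apply, map_mul, mul_mul_mul_comm, Complex.mul_conj', ha,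
        Complex.ofReal_one, one_pow, one_mul]
  rw [inner_ofKernel κ hB, inner_ofKernel κ hB]
  refine integral_congr_ae ?_
  filter_upwards [hV p φ, hV p ψ] with x hφ hψ
  rw [hφ, hψ, inner_mul_left_right]
  rw [mul_comm, Complex.norm_exp_ofReal_mul_I]

lemma scalarMeasure_ofKernel (φ : Lp ℂ 2 μ) :
    (ofKernel μ κ).scalarMeasure φ = (positionDensity φ).bind κ := by
  ext B hB
  rw [scalarMeasure_apply _ φ hB, Measure.bind_apply hB κ.aemeasurable,
    ofReal_re_inner_eq_lintegral (Complex.measurable_ofReal.comp (measurable_kernel_real κ hB))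
      (.of_forall fun x => measureReal_nonneg) (coeFn_ofKernel κ hB φ)]
  simp [ofReal_measureReal]

end POVM

end OfKernel

section TranslationKernel

variable {E : Type*} [MeasurableSpace E] [AddCommGroup E] [MeasurableAdd₂ E]

/-- The kernel sending `x` to the translate of `ρ` by `x`; convolution with `ρ` is composition with
this kernel. -/
noncomputable def translationKernel (ρ : Measure E) : Kernel E E :=
  (Kernel.id ×ₖ Kernel.const E ρ).map fun z => z.2 + z.1

lemma translationKernel_apply (ρ : Measure E) [SFinite ρ] (x : E) :
    translationKernel ρ x = ρ.map (· + x) := by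
  rw [translationKernel, Kernel.map_apply _ (by fun_prop), Kernel.prod_apply, Kernel.id_apply,
    Kernel.const_apply, Measure.dirac_prod, Measure.map_map (by fun_prop) (by fun_prop)]
  rfl

lemma translationKernel_real_apply (ρ : Measure E) [SFinite ρ] (x : E) {B : Set E}
    (hB : MeasurableSet B) : (translationKernel ρ x).real B = ρ.real ((· + x) ⁻¹' B) := by
  rw [translationKernel_apply, map_measureReal_apply (measurable_add_const x) hB]

instance isMarkovKernel_translationKernel (ρ : Measure E) [IsProbabilityMeasure ρ] :
    IsMarkovKernel (translationKernel ρ) :=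
  Kernel.IsMarkovKernel.map _ (by fun_prop)

lemma bind_translationKernel (ν ρ : Measure E) [SFinite ρ] :
    ν.bind (translationKernel ρ) = ν ∗ ρ := by
  ext B hB
  rw [Measure.bind_apply hB (Kernel.aemeasurable _), conv_apply_eq_lintegral _ _ hB]
  simp only [translationKernel_apply]

lemma translationKernel_real_image_add (ρ : Measure E) [SFinite ρ] (x q : E)
    {B : Set E} (hB : MeasurableSet B) :
    (translationKernel ρ (x + q)).real ((· + q) '' B) = (translationKernel ρ x).real B := by
  have hB' : MeasurableSet ((· + q) '' B) :=
    (MeasurableEquiv.addRight q).measurableSet_image.2 hB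
  rw [translationKernel_real_apply _ _ hB, translationKernel_real_apply _ _ hB']
  congr 1
  ext y
  simp [← add_assoc]

variable {μ : Measure E} [SFinite μ]

lemma POVM.isTranslationCovariant_ofKernel [μ.IsAddRightInvariant]
    {U : E → (Lp ℂ 2 μ ≃ₗᵢ[ℂ] Lp ℂ 2 μ)} (hU : ∀ q φ, U q φ =ᵐ[μ] fun x => φ (x - q))
    (ρ : Measure E) [IsProbabilityMeasure ρ] :
    (POVM.ofKernel μ (translationKernel ρ)).IsTranslationCovariant U := by
  intro q B hB φ ψ
  have hB' : MeasurableSet ((· + q) '' B) :=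
    (MeasurableEquiv.addRight q).measurableSet_image.2 hB
  rw [POVM.inner_ofKernel _ hB, POVM.inner_ofKernel _ hB',
    ← integral_sub_right_eq_self
      (fun x => ((translationKernel ρ x).real B : ℂ) * ⟪φ x, ψ x⟫) q]
  refine integral_congr_ae ?_
  filter_upwards [hU q φ, hU q ψ] with x hφ hψ
  rw [hφ, hψ, ← translationKernel_real_image_add ρ (x - q) q hB, sub_add_cancel]

lemma POVM.scalarMeasure_ofKernel_translationKernel (ρ : Measure E) [IsProbabilityMeasure ρ]
    (φ : Lp ℂ 2 μ) : (POVM.ofKernel μ (translationKernel ρ)).scalarMeasure φ =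
      positionDensity φ ∗ ρ := by
  rw [POVM.scalarMeasure_ofKernel, bind_translationKernel]

end TranslationKernel

section ZeroOne

variable {Ω : Type*} [MeasurableSpace Ω]

lemma real_eq_add_cond (ρ : Measure Ω) [IsProbabilityMeasure ρ] {s : Set Ω} (hs : MeasurableSet s)
    (B : Set Ω) : ρ.real B = ρ.real s * ρ[|s].real B + (1 - ρ.real s) * ρ[|sᶜ].real B := by
  have h := congrArg ENNReal.toReal (cond_add_cond_compl_eq (μ := ρ) (t := B) hs)
  rw [ENNReal.toReal_add (by finiteness) (by finiteness), ENNReal.toReal_mul,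
    ENNReal.toReal_mul] at h
  rw [← probReal_compl_eq_one_sub hs, mul_comm, mul_comm (ρ.real sᶜ)]
  exact h.symm

-- If `0 < ρ s < 1`, then conditioning on `s` and `sᶜ` decomposes `ρ` nontrivially.
lemma isZeroOneMeasure_of_forall_convex_combination {ρ : Measure Ω} [IsProbabilityMeasure ρ]
    (h : ∀ (ρ₁ ρ₂ : Measure Ω) [IsProbabilityMeasure ρ₁] [IsProbabilityMeasure ρ₂] (t : ℝ),
      0 < t → t < 1 → (∀ B, MeasurableSet B → ρ.real B = t * ρ₁.real B + (1 - t) * ρ₂.real B) →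
        ρ₁ = ρ) :
    IsZeroOneMeasure ρ := by
  refine ⟨fun s hs => or_iff_not_imp_left.2 fun hs₀ => by_contra fun hs₁ => hs₁ ?_⟩
  have hsc₀ : ρ sᶜ ≠ 0 := (prob_compl_eq_zero_iff hs).not.2 hs₁
  have := cond_isProbabilityMeasure hs₀
  have := cond_isProbabilityMeasure hsc₀
  have real_lt_one : ρ.real s < 1 := by
    rw [← sub_pos, ← probReal_compl_eq_one_sub hs]
    exact ENNReal.toReal_pos hsc₀ (measure_ne_top _ _)
  have cond_eq : ρ[|s] = ρ := h ρ[|s] ρ[|sᶜ] (ρ.real s)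
    (ENNReal.toReal_pos hs₀ (measure_ne_top _ _)) real_lt_one fun B _ => real_eq_add_cond ρ hs B
  rw [← cond_apply_self hs₀ (measure_ne_top _ _), cond_eq]

end ZeroOne

namespace POVM

section Extreme

variable {E : Type*} [MeasurableSpace E] [NormedAddCommGroup E] [NormedSpace ℝ E]
  [FiniteDimensional ℝ E] [BorelSpace E] {μ : Measure E} [μ.IsAddHaarMeasure]
  {U : E → (Lp ℂ 2 μ ≃ₗᵢ[ℂ] Lp ℂ 2 μ)} {ι : Type*} {V : ι → (Lp ℂ 2 μ ≃ₗᵢ[ℂ] Lp ℂ 2 μ)}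
  {ℓ : ι → StrongDual ℝ E} {M : POVM E (Lp ℂ 2 μ)}

theorem exists_eq_ofKernel_translationKernel (hU : ∀ q φ, U q φ =ᵐ[μ] fun x => φ (x - q))
    (hℓ : Function.Surjective ℓ)
    (hV : ∀ p φ, V p φ =ᵐ[μ] fun x => Complex.exp (Complex.I * ℓ p x) * φ x)
    (hMU : M.IsTranslationCovariant U) (hMV : M.IsInvariant V) :
    ∃ (ρ : Measure E) (_ : IsProbabilityMeasure ρ), ∀ B, MeasurableSet B →
      M.toFun B = (ofKernel μ (translationKernel ρ)).toFun B := by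
  have := FiniteDimensional.proper_real E
  obtain ⟨φ, r, hφ, hφr, hr⟩ := exists_seq_ae_positionDensity_norm_le μ
  have := fun k => isProbabilityMeasure_positionDensity (hφ k)
  have := fun k => M.isProbabilityMeasure_scalarMeasure (hφ k)
  obtain ⟨ρ, hρ, hMρ⟩ := exists_isProbabilityMeasure_forall_eq_conv
    (hMU.positionDensity_conv_scalarMeasure_comm hU
      fun B hB => hMV.exists_scalarMeasure_eq_lintegral hℓ hV hB) hφr hr
  refine ⟨ρ, hρ, fun B hB => toFun_eq_of_scalarMeasure_eq (fun ψ => ?_) hB⟩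
  rw [hMρ, scalarMeasure_ofKernel_translationKernel]

lemma ofKernel_translationKernel_injective {ρ ρ' : Measure E} [IsProbabilityMeasure ρ]
    [IsProbabilityMeasure ρ'] (h : ∀ B, MeasurableSet B →
      (ofKernel μ (translationKernel ρ)).toFun B = (ofKernel μ (translationKernel ρ')).toFun B) :
    ρ = ρ' := by
  have := FiniteDimensional.proper_real E
  obtain ⟨φ, r, hφ, hφr, hr⟩ := exists_seq_ae_positionDensity_norm_le μ
  have := fun k => isProbabilityMeasure_positionDensity (hφ k)
  refine eq_of_conv_eq hφr hr fun k => ?_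
  rw [← scalarMeasure_ofKernel_translationKernel, ← scalarMeasure_ofKernel_translationKernel]
  ext B hB
  rw [scalarMeasure_apply _ _ hB, scalarMeasure_apply _ _ hB, h B hB]

lemma IsExtremeAmong.exists_eq_dirac {P : POVM E (Lp ℂ 2 μ) → Prop} (hM : M.IsExtremeAmong P)
    (hP : ∀ (ρ : Measure E) [IsProbabilityMeasure ρ], P (ofKernel μ (translationKernel ρ)))
    {ρ : Measure E} [IsProbabilityMeasure ρ] (hMρ : ∀ B, MeasurableSet B →
      M.toFun B = (ofKernel μ (translationKernel ρ)).toFun B) :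
    ∃ q, ρ = Measure.dirac q := by
  have := FiniteDimensional.proper_real E
  have : IsZeroOneMeasure ρ := isZeroOneMeasure_of_forall_convex_combination
    fun ρ₁ ρ₂ _ _ t ht₀ ht₁ hρ => ofKernel_translationKernel_injective (μ := μ) fun B hB => by
      rw [← hMρ B hB]
      refine (hM _ _ (hP ρ₁) (hP ρ₂) t ht₀ ht₁ (fun C hC => ?_) B hB).1
      rw [hMρ C hC]
      refine ofKernel_eq_add hC fun x => ?_
      simp only [translationKernel_real_apply _ _ hC, hρ _ (measurable_add_const x hC)]
  have : NeZero ρ := ⟨IsProbabilityMeasure.ne_zero ρ⟩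
  exact IsZeroOneMeasure.exists_eq_dirac

end Extreme

section SharpPosition

variable {E : Type*} [MeasurableSpace E] [AddCommGroup E] {μ : Measure E}

lemma coeFn_ofKernel_translationKernel_dirac [MeasurableAdd₂ E] [SFinite μ] (q : E) {B : Set E}
    (hB : MeasurableSet B) (φ : Lp ℂ 2 μ) :
    (ofKernel μ (translationKernel (Measure.dirac q))).toFun B φ =ᵐ[μ]
      fun x => if x + q ∈ B then φ x else 0 := by
  refine (coeFn_ofKernel _ hB φ).trans (.of_forall fun x => ?_)
  have h : MeasurableSet ((· + x) ⁻¹' B) := measurable_add_const x hB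
  by_cases hx : x + q ∈ B <;>
    simp [translationKernel_real_apply _ _ hB, measureReal_def, Measure.dirac_apply' _ h,
      add_comm q, hx]

lemma isIdempotentElem_toFun_of_coeFn_eq_ite {M : POVM E (Lp ℂ 2 μ)} {q : E} {B : Set E}
    (h : ∀ φ, M.toFun B φ =ᵐ[μ] fun x => if x + q ∈ B then φ x else 0) :
    IsIdempotentElem (M.toFun B) := by
  ext φ
  filter_upwards [h (M.toFun B φ), h φ] with x hx₂ hx₁
  change M.toFun B (M.toFun B φ) x = M.toFun B φ x
  rw [hx₂, hx₁]
  split_ifs <;> rfl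

end SharpPosition

end POVM

theorem stmt6_general {E : Type*} [MeasurableSpace E] [NormedAddCommGroup E] [NormedSpace ℝ E]
    [FiniteDimensional ℝ E] [BorelSpace E] {μ : Measure E} [μ.IsAddHaarMeasure]
    {U : E → (Lp ℂ 2 μ ≃ₗᵢ[ℂ] Lp ℂ 2 μ)} (hU : ∀ q φ, U q φ =ᵐ[μ] fun x => φ (x - q))
    {ι : Type*} {ℓ : ι → StrongDual ℝ E} (hℓ : Function.Surjective ℓ)
    {V : ι → (Lp ℂ 2 μ ≃ₗᵢ[ℂ] Lp ℂ 2 μ)}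
    (hV : ∀ p φ, V p φ =ᵐ[μ] fun x => Complex.exp (Complex.I * ℓ p x) * φ x)
    {M : POVM E (Lp ℂ 2 μ)} (hMU : M.IsTranslationCovariant U) (hMV : M.IsInvariant V) :
    M.IsExtremeAmong (fun M => M.IsTranslationCovariant U ∧ M.IsInvariant V) ↔
      ∃ q : E, ∀ B : Set E, MeasurableSet B → ∀ φ : Lp ℂ 2 μ,
        M.toFun B φ =ᵐ[μ] fun x => if x + q ∈ B then φ x else 0 := by
  constructor
  · intro hM
    obtain ⟨ρ, _, hMρ⟩ := POVM.exists_eq_ofKernel_translationKernel hU hℓ hV hMU hMV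
    obtain ⟨q, rfl⟩ := hM.exists_eq_dirac (fun ρ _ =>
      ⟨POVM.isTranslationCovariant_ofKernel hU ρ, POVM.isInvariant_ofKernel _ hV⟩) hMρ
    refine ⟨q, fun B hB φ => ?_⟩
    rw [hMρ B hB]
    exact POVM.coeFn_ofKernel_translationKernel_dirac q hB φ
  · rintro ⟨q, hq⟩
    exact POVM.isExtremeAmong_of_isIdempotentElem _ fun B hB =>
      POVM.isIdempotentElem_toFun_of_coeFn_eq_ite (hq B hB)

lemma surjective_sum_smul_proj (ι : Type*) [Fintype ι] :
    Function.Surjective fun p : ι → ℝ =>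
      ∑ k, p k • (ContinuousLinearMap.proj k : StrongDual ℝ (ι → ℝ)) := fun L => by
  refine ⟨fun k => L (Pi.single k 1), ContinuousLinearMap.coe_injective ?_⟩
  exact LinearMap.pi_ext' fun k => by ext; simp [Pi.single_apply]

lemma isExtremeInL_iff_isExtremeAmong {n : ℕ} {U V : (Fin n → ℝ) → (L2Rn n ≃ₗᵢ[ℂ] L2Rn n)}
    {M : POVM (Fin n → ℝ) (L2Rn n)} : IsExtremeInL n U V M ↔
      M.IsExtremeAmong fun M => M.IsTranslationCovariant U ∧ M.IsInvariant V :=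
  ⟨fun h M₁ M₂ h₁ h₂ => h M₁ M₂ h₁.1 h₁.2 h₂.1 h₂.2,
    fun h M₁ M₂ h₁ h₁' h₂ h₂' => h M₁ M₂ ⟨h₁, h₁'⟩ ⟨h₂, h₂'⟩⟩

theorem stmt6 (n : ℕ) (hn : 1 ≤ n)
    (U : (Fin n → ℝ) → (L2Rn n ≃ₗᵢ[ℂ] L2Rn n))
    (hU : ∀ q : Fin n → ℝ, ∀ φ : L2Rn n,
      (U q φ : (Fin n → ℝ) → ℂ) =ᵐ[volume] fun x => φ (x - q))
    (V : (Fin n → ℝ) → (L2Rn n ≃ₗᵢ[ℂ] L2Rn n))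
    (hV : ∀ p : Fin n → ℝ, ∀ φ : L2Rn n,
      (V p φ : (Fin n → ℝ) → ℂ) =ᵐ[volume]
        fun x => Complex.exp (Complex.I * (∑ k, p k * x k)) * φ x)
    (M : POVM (Fin n → ℝ) (L2Rn n))
    (hMcov : TransCovariant n U M) (hMinv : BoostInvariant n V M) :
    IsExtremeInL n U V M ↔
      -- `M` is a translated canonical position observable `M_q(B) = M_κ(B − q)`,
      -- i.e. multiplication by the indicator of `B − q` (in particular a PVM)
      ∃ q : Fin n → ℝ, ∀ B : Set (Fin n → ℝ), MeasurableSet B → ∀ φ : L2Rn n,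
        (M.toFun B φ : (Fin n → ℝ) → ℂ) =ᵐ[volume]
          fun x => if x + q ∈ B then φ x else 0 :=
  isExtremeInL_iff_isExtremeAmong.trans <| stmt6_general hU (surjective_sum_smul_proj (Fin n))
    (fun p φ => (hV p φ).trans (.of_forall fun x => by simp)) hMcov hMinv
end

section
/- Let n ≥ 1, let Z ⊆ ℤⁿ be nonempty, let H_Z be a complex Hilbert space with orthonormal basis {e_m : m ∈ Z}, and let U_Z be the unitary representation of the torus 𝕋ⁿ on H_Z defined by U_Z(w) e_m = ⟨w, m⟩ e_m, where ⟨w, m⟩ = w₁^{m₁}···w_n^{m_n}. Let M be a POVM on (𝕋ⁿ, ℬ(𝕋ⁿ)) acting on H_Z that is covariant: U_Z(w) M(B) U_Z(w)* = M(w·B) for all w ∈ 𝕋ⁿ and Borel B ⊆ 𝕋ⁿ, where w·B = {w z : z ∈ B}. Then there exists a family {ξ_m : m ∈ Z} of unit vectors in ℓ²(ℕ) such that for all k, l ∈ Z and all Borel B ⊆ 𝕋ⁿ: ⟨e_k, M(B) e_l⟩ = ⟨ξ_k, ξ_l⟩ ∫_B ⟨z, k − l⟩ dμ_n(z), where μ_n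 is the normalized Haar measure on 𝕋ⁿ. -/
open MeasureTheory Set

local notation "⟪" x ", " y "⟫" => @inner ℂ _ _ x y

noncomputable instance : MeasurableSpace Circle := borel Circle
instance : BorelSpace Circle := ⟨rfl⟩

/-- `ℓ²(ℕ)`. -/
noncomputable abbrev ell2 : Type := lp (fun _ : ℕ => ℂ) 2

/-- The character `⟨w, m⟩ = w₁^{m₁} ⋯ w_n^{m_n}` of the torus `𝕋ⁿ`. -/
noncomputable def torusChar {n : ℕ} (w : Fin n → Circle) (m : Fin n → ℤ) : ℂ :=
  ∏ i, (w i : ℂ) ^ (m i)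

/-- Covariance of a POVM `M` on `𝕋ⁿ` acting on `H`:
`U_Z(w) M(B) U_Z(w)* = M(w·B)` for all `w ∈ 𝕋ⁿ`. -/
def TorusCovariant {n : ℕ} {H : Type*} [NormedAddCommGroup H] [InnerProductSpace ℂ H]
    [CompleteSpace H] (U : (Fin n → Circle) → (H ≃ₗᵢ[ℂ] H))
    (M : POVM (Fin n → Circle) H) : Prop :=
  ∀ w : Fin n → Circle, ∀ B : Set (Fin n → Circle), MeasurableSet B →
    ∀ φ ψ : H,
      ⟪(U w φ : H), M.toFun ((fun z => w * z) '' B) (U w ψ)⟫ = ⟪φ, M.toFun B ψ⟫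

/-!
Averaging `c(B) = χ(w)⁻¹ c(w·B)` over `w` and exchanging the integrals shows that a complex measure
`c` with `c(w·B) = χ(w) c(B)` is a constant multiple of `χ` times Haar measure. Covariance makes
every matrix element `⟨e_k, M(·) e_l⟩` such a measure for the character `χ_k / χ_l`, with some
constant `a_kl`. As `M` is positive, its continuous density matrix `(a_kl χ_k(z) / χ_l(z))` is
positive semidefinite at every point `z`, in particular at `z = 1`; hence `(a_kl)` is the Gram
matrix of vectors in a separable Hilbert space.
-/

open TopologicalSpace
open scoped ComplexOrder

lemma dist_sq_eq_two_of_orthonormal {𝕜 E ι : Type*} [RCLike 𝕜] [NormedAddCommGroup E]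
    [InnerProductSpace 𝕜 E] {v : ι → E} (hv : Orthonormal 𝕜 v) {i j : ι} (hij : i ≠ j) :
    dist (v i) (v j) ^ 2 = 2 := by
  rw [dist_eq_norm, norm_sub_sq (𝕜 := 𝕜), hv.2 hij, hv.1, hv.1]
  norm_num

lemma countable_of_orthonormal {𝕜 E ι : Type*} [RCLike 𝕜] [NormedAddCommGroup E]
    [InnerProductSpace 𝕜 E] [SeparableSpace E] {v : ι → E} (hv : Orthonormal 𝕜 v) :
    Countable ι := by
  refine Pairwise.countable_of_isOpen_disjoint (s := fun i => Metric.ball (v i) (1 / 2))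
    (fun i j hij => Metric.ball_disjoint_ball ?_) (fun _ => Metric.isOpen_ball)
    (fun i => ⟨v i, Metric.mem_ball_self (by norm_num)⟩)
  nlinarith [dist_sq_eq_two_of_orthonormal hv hij, dist_nonneg (x := v i) (y := v j)]

lemma exists_orthonormal_ell2 (ι : Type*) [Countable ι] :
    ∃ v : ι → ell2, Orthonormal ℂ v := by
  classical
  obtain ⟨f, hf⟩ := exists_injective_nat ι
  refine ⟨fun i => lp.single 2 (f i) (1 : ℂ), orthonormal_iff_ite.2 fun i j => ?_⟩
  simp [lp.inner_single_left, lp.single_apply, Pi.single_apply, hf.eq_iff]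

lemma nonempty_linearIsometry_ell2 (E : Type*) [NormedAddCommGroup E] [InnerProductSpace ℂ E]
    [CompleteSpace E] [SeparableSpace E] : Nonempty (E →ₗᵢ[ℂ] ell2) := by
  obtain ⟨w, b, -⟩ := exists_hilbertBasis ℂ E
  have : Countable w := countable_of_orthonormal b.orthonormal
  obtain ⟨v, hv⟩ := exists_orthonormal_ell2 w
  exact ⟨hv.orthogonalFamily.linearIsometry.comp b.repr.toLinearIsometry⟩

lemma exists_gram_ell2_eq_gram {ι E : Type*} [Countable ι] [NormedAddCommGroup E]
    [InnerProductSpace ℂ E] [CompleteSpace E] (η : ι → E) :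
    ∃ ξ : ι → ell2, Matrix.gram ℂ ξ = Matrix.gram ℂ η := by
  let S : Submodule ℂ E := (Submodule.span ℂ (range η)).topologicalClosure
  have hη (k : ι) : η k ∈ S :=
    Submodule.le_topologicalClosure _ (Submodule.subset_span (mem_range_self k))
  have : SeparableSpace S := ((countable_range η).isSeparable.span (R := ℂ)).closure.separableSpace
  have : CompleteSpace S := (Submodule.isClosed_topologicalClosure _).completeSpace_coe
  obtain ⟨f⟩ := nonempty_linearIsometry_ell2 S
  exact ⟨fun k => f ⟨η k, hη k⟩, Matrix.ext fun k l => f.inner_map_map ⟨η k, hη k⟩ ⟨η l, hη l⟩⟩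

lemma posSemidef_smul_one {ι : Type*} {K : Matrix ι ι ℂ} (hK : K.PosSemidef) :
    (Matrix.of fun k l => K k l • (1 : ℂ →L[ℂ] ℂ)).PosSemidef := by
  have hiff := (RKHS.posSemidef_tfae
    (K := Matrix.of fun k l => K k l • (1 : ℂ →L[ℂ] ℂ))).out 0 2
  refine hiff.2 ⟨?_, fun v => ?_⟩
  · ext k l
    simpa using hK.1.apply k l
  · refine (Complex.nonneg_iff.1 (hK.2 v)).1.trans_eq (congrArg Complex.re ?_)
    refine Finsupp.sum_congr fun k _ => Finsupp.sum_congr fun l _ => ?_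
    simp only [RCLike.star_def, ← hK.1.apply k l, Matrix.of_apply, smul_apply,
      one_apply_eq_self, smul_eq_mul, RCLike.inner_apply, map_mul]
    ring

lemma exists_gram_ell2_eq {ι : Type*} [Countable ι] {K : Matrix ι ι ℂ} (hK : K.PosSemidef) :
    ∃ ξ : ι → ell2, Matrix.gram ℂ ξ = K := by
  have : Fact (Matrix.of fun k l => K k l • (1 : ℂ →L[ℂ] ℂ)).PosSemidef :=
    ⟨posSemidef_smul_one hK⟩
  let E := RKHS.OfKernel (Matrix.of fun k l => K k l • (1 : ℂ →L[ℂ] ℂ))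
  obtain ⟨ξ, hξ⟩ := exists_gram_ell2_eq_gram fun k => RKHS.kerFun E k 1
  refine ⟨ξ, hξ.trans (Matrix.ext fun k l => ?_)⟩
  rw [Matrix.gram_apply, ← RKHS.kernel_inner, RKHS.OfKernel.kernel_ofKernel]
  simpa using hK.1.apply k l

section ContinuousDensity

variable {X : Type*} [TopologicalSpace X] [MeasurableSpace X] {μ : Measure X}
  [μ.IsOpenPosMeasure]

lemma nonneg_of_forall_setIntegral_nonneg {g : X → ℝ} (hg : Continuous g) (hgi : Integrable g μ)
    (h : ∀ B, MeasurableSet B → 0 ≤ ∫ z in B, g z ∂μ) (z : X) : 0 ≤ g z := by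
  have hae : 0 ≤ᵐ[μ] g := ae_nonneg_of_forall_setIntegral_nonneg hgi fun B hB _ => h B hB
  exact (isClosed_le continuous_const hg).closure_subset (Measure.dense_of_ae hae z)

lemma eq_of_forall_setIntegral_eq {g₁ g₂ : X → ℂ} (hg₁ : Continuous g₁) (hg₂ : Continuous g₂)
    (hi₁ : Integrable g₁ μ) (hi₂ : Integrable g₂ μ)
    (h : ∀ B, MeasurableSet B → ∫ z in B, g₁ z ∂μ = ∫ z in B, g₂ z ∂μ) : g₁ = g₂ :=
  (hg₁.ae_eq_iff_eq μ hg₂).1 (hi₁.ae_eq_of_forall_setIntegral_eq g₁ g₂ hi₂ fun B hB _ => h B hB)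

lemma complex_nonneg_of_forall_setIntegral_nonneg {g : X → ℂ} (hg : Continuous g)
    (hgi : Integrable g μ) (h : ∀ B, MeasurableSet B → 0 ≤ ∫ z in B, g z ∂μ) (z : X) :
    0 ≤ g z := by
  have hre (B : Set X) : ∫ z in B, (g z).re ∂μ = (∫ z in B, g z ∂μ).re :=
    integral_re hgi.integrableOn
  have hre_nonneg (z : X) : 0 ≤ (g z).re :=
    nonneg_of_forall_setIntegral_nonneg (Complex.continuous_re.comp hg) hgi.re
      (fun B hB => (Complex.nonneg_iff.1 (h B hB)).1.trans_eq (hre B).symm) z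
  have hg_eq : g = fun z => ((g z).re : ℂ) := by
    refine eq_of_forall_setIntegral_eq hg (by fun_prop) hgi hgi.re.ofReal fun B hB => ?_
    rw [integral_complex_ofReal, hre]
    exact Complex.eq_re_of_ofReal_le (r := 0) (h B hB)
  rw [hg_eq]
  exact Complex.zero_le_real.2 (hre_nonneg z)

lemma posSemidef_of_forall_posSemidef_setIntegral {ι : Type*} {D : X → Matrix ι ι ℂ}
    (hc : ∀ k l, Continuous fun z => D z k l) (hi : ∀ k l, Integrable (fun z => D z k l) μ)
    (h : ∀ B, MeasurableSet B → (Matrix.of fun k l => ∫ z in B, D z k l ∂μ).PosSemidef) (z : X) :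
    (D z).PosSemidef := by
  refine ⟨Matrix.ext fun k l => ?_, fun x => ?_⟩
  · have hconj : Integrable (fun z => star (D z l k)) μ :=
      Complex.conjCLE.toContinuousLinearMap.integrable_comp (hi l k)
    refine congrFun (eq_of_forall_setIntegral_eq (hc l k).star (hc k l) hconj (hi k l)
      fun B hB => ?_) z
    exact integral_conj.trans ((h B hB).1.apply k l)
  · have hterm (i j : ι) : Integrable (fun z => star (x i) * D z i j * x j) μ :=
      ((hi i j).const_mul _).mul_const _
    refine complex_nonneg_of_forall_setIntegral_nonneg (μ := μ)
      (g := fun z => x.sum fun i xi => x.sum fun j xj => star xi * D z i j * xj)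
      ?_ ?_ (fun B hB => ?_) z
    · exact continuous_finsetSum _ fun i _ => continuous_finsetSum _ fun j _ =>
        (continuous_const.mul (hc i j)).mul continuous_const
    · exact integrable_finsetSum _ fun i _ => integrable_finsetSum _ fun j _ => hterm i j
    · refine ((h B hB).2 x).trans_eq ?_
      simp only [Finsupp.sum]
      rw [integral_finsetSum _ fun i _ =>
        integrable_finsetSum _ fun j _ => (hterm i j).integrableOn]
      refine Finset.sum_congr rfl fun i _ => ?_
      rw [integral_finsetSum _ fun j _ => (hterm i j).integrableOn]
      simp_rw [integral_mul_const, integral_const_mul, Matrix.of_apply]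

end ContinuousDensity

lemma posSemidef_inner_of_isPositive {ι 𝕜 H : Type*} [RCLike 𝕜] [NormedAddCommGroup H]
    [InnerProductSpace 𝕜 H] {T : H →L[𝕜] H} (hT : T.IsPositive) (e : ι → H) :
    (Matrix.of fun k l => inner 𝕜 (e k) (T (e l))).PosSemidef := by
  refine ⟨Matrix.ext fun k l => ?_, fun x => ?_⟩
  · exact (inner_conj_symm _ _).trans (hT.isSymmetric _ _)
  · refine (hT.inner_nonneg_right (Finsupp.linearCombination 𝕜 e x)).trans_eq ?_
    simp only [Finsupp.linearCombination_apply, Finsupp.sum, map_sum, map_smul, sum_inner,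
      inner_sum, inner_smul_left, inner_smul_right, Finset.mul_sum, Matrix.of_apply]
    rw [Finset.sum_comm]
    refine Finset.sum_congr rfl fun i _ => Finset.sum_congr rfl fun j _ => ?_
    rw [RCLike.star_def]
    ring

lemma exists_measureReal_decomposition {Ω : Type*} [MeasurableSpace Ω] (c : ComplexMeasure Ω) :
    ∃ ρ : Fin 4 → Measure Ω, (∀ j, IsFiniteMeasure (ρ j)) ∧
      ∀ B, MeasurableSet B → c B = ∑ j : Fin 4, Complex.I ^ (j : ℕ) * ((ρ j).real B : ℂ) := by
  let re := (ComplexMeasure.re c).toJordanDecomposition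
  let im := (ComplexMeasure.im c).toJordanDecomposition
  refine ⟨![re.posPart, im.posPart, re.negPart, im.negPart], ?_, fun B hB => ?_⟩
  · intro j
    fin_cases j <;> dsimp <;> infer_instance
  · have hre := (ComplexMeasure.re c).apply_eq_posPart_real_sub_negPart_real hB
    have him := (ComplexMeasure.im c).apply_eq_posPart_real_sub_negPart_real hB
    rw [← Complex.re_add_im (c B)]
    change (((ComplexMeasure.re c B : ℝ) : ℂ) + (ComplexMeasure.im c B : ℝ) * Complex.I = _)
    rw [hre, him]
    simp only [Complex.ofReal_sub, Fin.sum_univ_four, Fin.isValue, Fin.coe_ofNat_eq_mod,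
      Nat.zero_mod, Nat.one_mod, Nat.reduceMod, Nat.mod_succ, pow_zero, pow_one, Complex.I_sq,
      Complex.I_pow_three, Matrix.cons_val_zero, Matrix.cons_val_one, Matrix.cons_val, re, im]
    ring

section Averaging

variable {G : Type*} [Group G] [MeasurableSpace G] [MeasurableMul₂ G]
  {χ : G →* Circle} {B : Set G}

lemma integral_indicator_inv_mul_left (ν : Measure G) [IsFiniteMeasure ν] (hB : MeasurableSet B)
    (w : G) :
    ∫ z, B.indicator (fun _ => (1 : ℂ)) (w⁻¹ * z) ∂ν = ν.real ((fun z => w * z) '' B) := by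
  have hpre : MeasurableSet ((w⁻¹ * ·) ⁻¹' B) := measurable_const_mul _ hB
  rw [Set.image_mul_left, ← integral_indicator_one hpre, ← integral_complex_ofReal]
  congr 1 with z
  by_cases hz : w⁻¹ * z ∈ B <;> simp [hz]

variable [MeasurableInv G]

lemma integral_inv_character_mul_indicator (μ : Measure G) [μ.IsMulLeftInvariant]
    [μ.IsInvInvariant] (hB : MeasurableSet B) (z : G) :
    ∫ w, ((χ w)⁻¹ : ℂ) * B.indicator (fun _ => 1) (w⁻¹ * z) ∂μ =
      ((χ z)⁻¹ : ℂ) * ∫ u in B, (χ u : ℂ) ∂μ := by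
  rw [← integral_div_left_eq_self _ μ z, ← integral_indicator hB, ← integral_const_mul]
  congr 1 with u
  by_cases hu : u ∈ B <;> simp [hu, div_eq_mul_inv, mul_comm]

lemma integrable_prod_inv_character_mul_indicator (μ ν : Measure G) [IsFiniteMeasure μ]
    [IsFiniteMeasure ν] (hχ : Measurable χ) (hB : MeasurableSet B) :
    Integrable (fun p : G × G => ((χ p.1)⁻¹ : ℂ) * B.indicator (fun _ => 1) (p.1⁻¹ * p.2))
      (μ.prod ν) := by
  have hcoe : Measurable fun z : Circle => (z : ℂ) := Continuous.measurable (by fun_prop)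
  have hmeas : Measurable fun p : G × G =>
      ((χ p.1)⁻¹ : ℂ) * B.indicator (fun _ => 1) (p.1⁻¹ * p.2) :=
    (hcoe.comp (hχ.comp measurable_fst)).inv.mul
      ((measurable_const.indicator hB).comp (measurable_fst.inv.mul measurable_snd))
  refine .of_bound hmeas.aestronglyMeasurable 1 (.of_forall fun p => ?_)
  by_cases hp : p.1⁻¹ * p.2 ∈ B <;> simp [hp, Circle.norm_coe]

lemma integrable_inv_character_mul_measureReal (μ ν : Measure G) [IsFiniteMeasure μ]
    [IsFiniteMeasure ν] (hχ : Measurable χ) (hB : MeasurableSet B) :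
    Integrable (fun w => ((χ w)⁻¹ : ℂ) * ν.real ((fun z => w * z) '' B)) μ := by
  simpa only [integral_const_mul, integral_indicator_inv_mul_left ν hB]
    using (integrable_prod_inv_character_mul_indicator μ ν hχ hB).integral_prod_left

lemma integral_inv_character_mul_measureReal (μ ν : Measure G) [IsFiniteMeasure μ]
    [IsFiniteMeasure ν] [μ.IsMulLeftInvariant] [μ.IsInvInvariant] (hχ : Measurable χ)
    (hB : MeasurableSet B) :
    ∫ w, ((χ w)⁻¹ : ℂ) * ν.real ((fun z => w * z) '' B) ∂μ =
      (∫ z, ((χ z)⁻¹ : ℂ) ∂ν) * ∫ z in B, (χ z : ℂ) ∂μ := by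
  simp_rw [← integral_indicator_inv_mul_left ν hB, ← integral_const_mul]
  rw [integral_integral_swap (integrable_prod_inv_character_mul_indicator μ ν hχ hB)]
  simp_rw [integral_inv_character_mul_indicator μ hB, integral_mul_const, integral_const_mul]

lemma exists_eq_mul_setIntegral_of_image_mul_left (c : ComplexMeasure G) (μ : Measure G)
    [IsProbabilityMeasure μ] [μ.IsMulLeftInvariant] [μ.IsInvInvariant] (hχ : Measurable χ)
    (hc : ∀ w B, MeasurableSet B → c ((fun z => w * z) '' B) = χ w * c B) :
    ∃ a : ℂ, ∀ B, MeasurableSet B → c B = a * ∫ z in B, (χ z : ℂ) ∂μ := by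
  obtain ⟨ρ, hfin, hρ⟩ := exists_measureReal_decomposition c
  refine ⟨∑ j : Fin 4, Complex.I ^ (j : ℕ) * ∫ z, ((χ z)⁻¹ : ℂ) ∂ρ j, fun B hB => ?_⟩
  have hmeas (w : G) : MeasurableSet ((fun z => w * z) '' B) :=
    (MeasurableEquiv.mulLeft w).measurableSet_image.2 hB
  have hcB (w : G) : c B = ∑ j : Fin 4, Complex.I ^ (j : ℕ) *
      (((χ w)⁻¹ : ℂ) * (ρ j).real ((fun z => w * z) '' B)) := by
    rw [← inv_mul_cancel_left₀ (Circle.coe_ne_zero (χ w)) (c B), ← hc w B hB, hρ _ (hmeas w),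
      Finset.mul_sum]
    exact Finset.sum_congr rfl fun j _ => mul_left_comm _ _ _
  calc c B = ∫ _, c B ∂μ := by simp
    _ = ∫ w, ∑ j : Fin 4, Complex.I ^ (j : ℕ) *
          (((χ w)⁻¹ : ℂ) * (ρ j).real ((fun z => w * z) '' B)) ∂μ :=
        integral_congr_ae (.of_forall hcB)
    _ = ∑ j : Fin 4, Complex.I ^ (j : ℕ) *
          ((∫ z, ((χ z)⁻¹ : ℂ) ∂ρ j) * ∫ z in B, (χ z : ℂ) ∂μ) := by
        rw [integral_finsetSum _ fun j _ =>
          (integrable_inv_character_mul_measureReal μ (ρ j) hχ hB).const_mul _]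
        simp_rw [integral_const_mul, integral_inv_character_mul_measureReal μ _ hχ hB]
    _ = _ := by simp_rw [Finset.sum_mul, mul_assoc]

end Averaging

namespace POVM

variable {Ω H ι : Type*} [MeasurableSpace Ω] [NormedAddCommGroup H] [InnerProductSpace ℂ H]
  [CompleteSpace H]

open Classical in
/-- The matrix element `B ↦ ⟪φ, M(B) ψ⟫` as a complex measure; as vector measures require, it is
set to `0` on nonmeasurable sets, where `M` is unconstrained. -/
noncomputable def complexMeasure (M : POVM Ω H) (φ ψ : H) : ComplexMeasure Ω where
  measureOf' B := if MeasurableSet B then ⟪φ, M.toFun B ψ⟫ else 0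
  empty' := by
    have h := M.m_iUnion (fun _ => ∅) (fun _ => .empty) (fun _ _ _ => disjoint_bot_left) φ ψ
    simpa using tendsto_nhds_unique tendsto_const_nhds h.summable.tendsto_atTop_zero
  not_measurable' _ hB := if_neg hB
  m_iUnion' B hB hd := by
    simpa [hB, MeasurableSet.iUnion hB] using M.m_iUnion B hB hd φ ψ

lemma complexMeasure_apply (M : POVM Ω H) (φ ψ : H) {B : Set Ω} (hB : MeasurableSet B) :
    M.complexMeasure φ ψ B = ⟪φ, M.toFun B ψ⟫ :=
  if_pos hB

lemma posSemidef_of_inner_eq_setIntegral [TopologicalSpace Ω] {μ : Measure Ω}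
    [μ.IsOpenPosMeasure] (M : POVM Ω H) (e : ι → H) {D : Ω → Matrix ι ι ℂ}
    (hc : ∀ k l, Continuous fun z => D z k l) (hi : ∀ k l, Integrable (fun z => D z k l) μ)
    (h : ∀ k l B, MeasurableSet B → ⟪e k, M.toFun B (e l)⟫ = ∫ z in B, D z k l ∂μ) (z : Ω) :
    (D z).PosSemidef := by
  refine posSemidef_of_forall_posSemidef_setIntegral hc hi (fun B hB => ?_) z
  simp_rw [← h _ _ B hB]
  exact posSemidef_inner_of_isPositive (M.isPositive B hB) e

lemma posSemidef_of_inner_eq_mul_setIntegral [Monoid Ω] [TopologicalSpace Ω]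
    [OpensMeasurableSpace Ω] {μ : Measure Ω} [μ.IsOpenPosMeasure] [IsFiniteMeasure μ]
    (M : POVM Ω H) (e : ι → H) (χ : ι → Ω →ₜ* Circle) {a : Matrix ι ι ℂ}
    (h : ∀ k l B, MeasurableSet B →
      ⟪e k, M.toFun B (e l)⟫ = a k l * ∫ z in B, ((χ k / χ l) z : ℂ) ∂μ) :
    a.PosSemidef := by
  have hc (k l : ι) : Continuous fun z => a k l * ((χ k / χ l) z : ℂ) := by fun_prop
  have hi (k l : ι) : Integrable (fun z => a k l * ((χ k / χ l) z : ℂ)) μ :=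
    .of_bound (hc k l).aestronglyMeasurable ‖a k l‖ (.of_forall fun z => by
      rw [norm_mul, Circle.norm_coe, mul_one])
  simpa using M.posSemidef_of_inner_eq_setIntegral e hc hi
    (fun k l B hB => (h k l B hB).trans (integral_const_mul _ _).symm) 1

variable {G : Type*} [MeasurableSpace G]

/-- Covariance of `M` under the transformations `U w`, in the form `U(w)* M(w·B) U(w) = M(B)`. For
unitary `U w` this is `U(w) M(B) U(w)* = M(w·B)`, and stating it through matrix elements allows `U`
to be any family of maps. -/
def IsCovariant [Mul G] (M : POVM G H) (U : G → H → H) : Prop :=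
  ∀ w : G, ∀ B : Set G, MeasurableSet B → ∀ φ ψ : H,
    ⟪U w φ, M.toFun ((fun z => w * z) '' B) (U w ψ)⟫ = ⟪φ, M.toFun B ψ⟫

lemma IsCovariant.inner_image_mul_left [Group G] {M : POVM G H} {U : G → H → H}
    (hM : M.IsCovariant U) {e₁ e₂ : H} {χ₁ χ₂ : G →* Circle} (h₁ : ∀ w, U w e₁ = (χ₁ w : ℂ) • e₁)
    (h₂ : ∀ w, U w e₂ = (χ₂ w : ℂ) • e₂) (w : G) {B : Set G} (hB : MeasurableSet B) :
    ⟪e₁, M.toFun ((fun z => w * z) '' B) e₂⟫ = (χ₁ / χ₂) w * ⟪e₁, M.toFun B e₂⟫ := by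
  rw [← hM w B hB, h₁, h₂, map_smul, inner_smul_left, inner_smul_right, ← Circle.coe_inv_eq_conj,
    MonoidHom.div_apply]
  simp [field]

lemma IsCovariant.exists_inner_eq [Group G] [MeasurableMul₂ G] [MeasurableInv G]
    {M : POVM G H} {U : G → H → H} (hM : M.IsCovariant U) (μ : Measure G)
    [IsProbabilityMeasure μ] [μ.IsMulLeftInvariant] [μ.IsInvInvariant] {e₁ e₂ : H}
    {χ₁ χ₂ : G →* Circle} (hχ : Measurable (χ₁ / χ₂)) (h₁ : ∀ w, U w e₁ = (χ₁ w : ℂ) • e₁)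
    (h₂ : ∀ w, U w e₂ = (χ₂ w : ℂ) • e₂) :
    ∃ a : ℂ, ∀ B, MeasurableSet B →
      ⟪e₁, M.toFun B e₂⟫ = a * ∫ z in B, ((χ₁ / χ₂) z : ℂ) ∂μ := by
  have hc (w : G) (B : Set G) (hB : MeasurableSet B) :
      M.complexMeasure e₁ e₂ ((fun z => w * z) '' B) =
        (χ₁ / χ₂) w * M.complexMeasure e₁ e₂ B := by
    have hwB : MeasurableSet ((fun z => w * z) '' B) :=
      (MeasurableEquiv.mulLeft w).measurableSet_image.2 hB
    rw [M.complexMeasure_apply _ _ hwB, M.complexMeasure_apply _ _ hB,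
      hM.inner_image_mul_left h₁ h₂ w hB]
  obtain ⟨a, ha⟩ := exists_eq_mul_setIntegral_of_image_mul_left _ μ hχ hc
  exact ⟨a, fun B hB => (M.complexMeasure_apply e₁ e₂ hB).symm.trans (ha B hB)⟩

end POVM

theorem stmt7_general {G H ι : Type*} [Countable ι] [NormedAddCommGroup H] [InnerProductSpace ℂ H]
    [CompleteSpace H] [Group G] [TopologicalSpace G] [IsTopologicalGroup G]
    [SecondCountableTopology G] [MeasurableSpace G] [BorelSpace G] (μ : Measure G)
    [μ.IsHaarMeasure] [μ.IsInvInvariant] [IsProbabilityMeasure μ] (e : ι → H)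
    (χ : ι → G →ₜ* Circle) (U : G → H → H) (hU : ∀ w i, U w (e i) = (χ i w : ℂ) • e i)
    (M : POVM G H) (hM : M.IsCovariant U) :
    ∃ ξ : ι → ell2, (∀ i, ‖ξ i‖ = ‖e i‖) ∧ ∀ k l, ∀ B, MeasurableSet B →
      ⟪e k, M.toFun B (e l)⟫ = ⟪ξ k, ξ l⟫ * ∫ z in B, ((χ k / χ l) z : ℂ) ∂μ := by
  choose a ha using fun k l => hM.exists_inner_eq μ (χ₁ := χ k) (χ₂ := χ l)
    (map_continuous (χ k / χ l)).measurable (fun w => hU w k) (fun w => hU w l)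
  obtain ⟨ξ, hξ⟩ := exists_gram_ell2_eq (M.posSemidef_of_inner_eq_mul_setIntegral e χ ha)
  have hinner (k l : ι) : ⟪ξ k, ξ l⟫ = a k l := congrFun₂ hξ k l
  refine ⟨ξ, fun i => ?_, fun k l B hB => by rw [hinner]; exact ha k l B hB⟩
  have hself : ⟪e i, e i⟫ = ⟪ξ i, ξ i⟫ := by
    simpa [M.normalized, hinner, -inner_self_eq_norm_sq_to_K] using ha i i univ .univ
  rw [norm_eq_sqrt_re_inner (𝕜 := ℂ), ← hself, ← norm_eq_sqrt_re_inner]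

/-- The character `w ↦ ⟨w, m⟩` of the torus as a bundled continuous homomorphism into `Circle`, so
that characters can be divided; `torusChar` is its complex-valued version. -/
noncomputable def torusCharacter {n : ℕ} (m : Fin n → ℤ) : (Fin n → Circle) →ₜ* Circle where
  toFun w := ∏ i, w i ^ m i
  map_one' := by simp
  map_mul' w z := by simp [mul_zpow, Finset.prod_mul_distrib]
  continuous_toFun := by fun_prop

lemma coe_torusCharacter_apply {n : ℕ} (m : Fin n → ℤ) (w : Fin n → Circle) :
    (torusCharacter m w : ℂ) = torusChar w m :=
  map_prod Circle.coeHom _ _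

lemma torusCharacter_sub {n : ℕ} (k l : Fin n → ℤ) :
    torusCharacter (k - l) = torusCharacter k / torusCharacter l := by
  ext w
  change ((∏ i, w i ^ (k i - l i) : Circle) : ℂ) = ((∏ i, w i ^ k i) / ∏ i, w i ^ l i : Circle)
  simp_rw [zpow_sub, ← div_eq_mul_inv, Finset.prod_div_distrib]

theorem stmt7 (n : ℕ) (hn : 1 ≤ n) (Z : Set (Fin n → ℤ)) (hZ : Z.Nonempty)
    (H : Type*) [NormedAddCommGroup H] [InnerProductSpace ℂ H] [CompleteSpace H]
    -- an orthonormal basis of `H_Z` indexed by `Z`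
    (b : HilbertBasis Z ℂ H)
    -- the normalized Haar measure on `𝕋ⁿ`
    (μ : Measure (Fin n → Circle)) (hHaar : μ.IsHaarMeasure) (hProb : IsProbabilityMeasure μ)
    -- the representation `U_Z(w) e_m = ⟨w, m⟩ e_m`
    (U : (Fin n → Circle) → (H ≃ₗᵢ[ℂ] H))
    (hU : ∀ w : Fin n → Circle, ∀ m : Z, U w (b m) = torusChar w (m : Fin n → ℤ) • b m)
    (M : POVM (Fin n → Circle) H)
    (hMcov : TorusCovariant U M) :
    ∃ ξ : Z → ell2, (∀ m : Z, ‖ξ m‖ = 1) ∧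
      ∀ k l : Z, ∀ B : Set (Fin n → Circle), MeasurableSet B →
        ⟪b k, M.toFun B (b l)⟫
          = ⟪ξ k, ξ l⟫ * ∫ z in B, torusChar z ((k : Fin n → ℤ) - l) ∂μ := by
  obtain ⟨ξ, hnorm, hξ⟩ := stmt7_general μ b (fun m : Z => torusCharacter m) (fun w => U w)
    (fun w m => by rw [hU, coe_torusCharacter_apply]) M hMcov
  refine ⟨ξ, fun m => (hnorm m).trans (b.orthonormal.1 m), fun k l B hB => ?_⟩
  simp_rw [hξ k l B hB, ← torusCharacter_sub, coe_torusCharacter_apply]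
end
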